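/- arXiv:0912.4747 — 6 statements merged into one kernel-verified Lean document; each statement's English description precedes it below -/
import Mathlib

section
/- For n ≥ 2, the number of permutations of length n that avoid the classical pattern 123 and end with a descent (π(n-1) > π(n)) equals C_n − C_{n−1}, where C_m is the m-th Catalan number. -/
/-- Number of occurrences of the classical pattern 1-2-3 in `π`. -/
def occ123 {n : ℕ} (π : Equiv.Perm (Fin n)) : ℕ :=
  (Finset.univ.filter (fun t : Fin n × Fin n × Fin n =>
    t.1 < t.2.1 ∧ t.2.1 < t.2.2 ∧ π t.1 < π t.2.1 ∧ π t.2.1 < π t.2.2)).card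

/-- Number of occurrences of the vincular pattern 1-23 in `π`. -/
def occ1_23 {n : ℕ} (π : Equiv.Perm (Fin n)) : ℕ :=
  (Finset.univ.filter (fun t : Fin n × Fin n × Fin n =>
    t.1 < t.2.1 ∧ t.2.1 < t.2.2 ∧ (t.2.2 : ℕ) = (t.2.1 : ℕ) + 1 ∧
      π t.1 < π t.2.1 ∧ π t.2.1 < π t.2.2)).card

/-- Number of occurrences of the vincular pattern 12-3 in `π`. -/
def occ12_3 {n : ℕ} (π : Equiv.Perm (Fin n)) : ℕ :=
  (Finset.univ.filter (fun t : Fin n × Fin n × Fin n =>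
    t.1 < t.2.1 ∧ t.2.1 < t.2.2 ∧ (t.2.1 : ℕ) = (t.1 : ℕ) + 1 ∧
      π t.1 < π t.2.1 ∧ π t.2.1 < π t.2.2)).card

/-!
A 123-avoider of length `n + 1` arises from one of length `n` by appending a last value `v`, and
this creates no occurrence of 123 exactly when `v` is at most every ascent top. Let `h` be the
largest such `v` for a given avoider. Its children are then obtained from `v = 0, 1, …, h`, and
their own labels are `h + 1, 1, …, h`: a generating tree whose level sizes are ballot numbers, and
hence Catalan numbers when counted from the root.

If an avoider ends with an ascent, its next-to-last entry is the minimum, since a smaller entry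
would precede that ascent. Deleting this entry is a bijection onto the avoiders of length one less.
-/

section Avoidance

/-- Avoidance of the classical pattern 123, for a map between arbitrary ordered types (a permutation
is viewed as its underlying function). -/
def Avoids123 {α β : Type*} [LT α] [LT β] (f : α → β) : Prop :=
  ∀ ⦃i j k⦄, i < j → j < k → f i < f j → ¬ f j < f k

variable {α β γ : Type*}

theorem Avoids123.comp_strictMono [Preorder α] [Preorder γ] [LT β] {f : α → β} (hf : Avoids123 f)
    {g : γ → α} (hg : StrictMono g) : Avoids123 (f ∘ g) :=
  fun _ _ _ hij hjk ↦ hf (hg hij) (hg hjk)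

theorem avoids123_strictMono_comp_iff [LT α] [LinearOrder β] [Preorder γ] {f : α → β} {g : β → γ}
    (hg : StrictMono g) : Avoids123 (g ∘ f) ↔ Avoids123 f := by
  simp only [Avoids123, Function.comp_apply, hg.lt_iff_lt]

theorem avoids123_snoc_iff [LinearOrder β] {n : ℕ} {f : Fin n → β} {v : β} :
    Avoids123 (Fin.snoc f v : Fin (n + 1) → β) ↔
      Avoids123 f ∧ ∀ i j, i < j → f i < f j → v ≤ f j := by
  simp only [Avoids123, Fin.forall_fin_succ', Fin.snoc_castSucc, Fin.snoc_last,
    Fin.castSucc_lt_castSucc_iff, Fin.castSucc_lt_last, not_lt_of_ge (Fin.le_last _), not_lt]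
  grind

theorem Avoids123.penultimate_le [LinearOrder β] {n : ℕ} {f : Fin (n + 2) → β} (hf : Avoids123 f)
    (hasc : f (Fin.last n).castSucc < f (Fin.last (n + 1))) (i : Fin (n + 2)) :
    f (Fin.last n).castSucc ≤ f i := by
  by_contra! hlt
  have hi : i < (Fin.last n).castSucc := by grind
  exact hf hi (Fin.castSucc_lt_last _) hlt hasc

theorem avoids123_insertNth_penultimate_iff [Preorder β] {n : ℕ} {f : Fin (n + 1) → β} {a : β}
    (ha : ∀ i, a ≤ f i) :
    Avoids123 ((Fin.last n).castSucc.insertNth a f : Fin (n + 2) → β) ↔ Avoids123 f := by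
  set p := (Fin.last n).castSucc
  set g : Fin (n + 2) → β := p.insertNth a f
  have hgp : g p = a := Fin.insertNth_apply_same ..
  have hgs (i) : g (p.succAbove i) = f i := Fin.insertNth_apply_succAbove ..
  have hmin : ∀ i, g p ≤ g i := (Fin.forall_iff_succAbove p).2
    ⟨le_rfl, fun i ↦ by simpa only [hgp, hgs] using ha i⟩
  refine ⟨fun hg ↦ funext hgs ▸ hg.comp_strictMono (Fin.strictMono_succAbove p), ?_⟩
  intro hf i j k hij hjk h₁ h₂
  have hi : i ≠ p := by grind
  have hj : j ≠ p := fun h ↦ (hmin i).not_gt (h ▸ h₁)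
  have hk : k ≠ p := fun h ↦ (hmin j).not_gt (h ▸ h₂)
  obtain ⟨i, rfl⟩ := Fin.exists_succAbove_eq hi
  obtain ⟨j, rfl⟩ := Fin.exists_succAbove_eq hj
  obtain ⟨k, rfl⟩ := Fin.exists_succAbove_eq hk
  rw [Fin.succAbove_lt_succAbove_iff] at hij hjk
  rw [hgs, hgs] at h₁ h₂
  exact hf hij hjk h₁ h₂

theorem occ123_eq_zero_iff {n : ℕ} (π : Equiv.Perm (Fin n)) : occ123 π = 0 ↔ Avoids123 π := by
  simp [occ123, Avoids123]

end Avoidance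

section MinAscentTop

variable {k n : ℕ}

/-- The smallest ascent top of `f`, that is, the smallest `f j` with `f i < f j` for some `i < j`.
It is read in `Fin (n + 1)` so that it can be `n` when `f` has no ascent. -/
def minAscentTop (f : Fin k → Fin n) : Fin (n + 1) :=
  (Finset.univ.filter fun p : Fin k × Fin k ↦ p.1 < p.2 ∧ f p.1 < f p.2).inf
    fun p ↦ (f p.2).castSucc

theorem le_minAscentTop_iff {f : Fin k → Fin n} {v : Fin (n + 1)} :
    v ≤ minAscentTop f ↔ ∀ i j, i < j → f i < f j → v ≤ (f j).castSucc := by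
  simp [minAscentTop]

theorem le_minAscentTop_snoc_iff {f : Fin k → Fin n} {v : Fin (n + 1)} {w : Fin (n + 2)} :
    w ≤ minAscentTop (Fin.snoc (v.succAbove ∘ f) v : Fin (k + 1) → Fin (n + 1)) ↔
      (∀ i j, i < j → f i < f j → w ≤ (v.succAbove (f j)).castSucc) ∧
        ∀ i, (f i).castSucc < v → w ≤ v.castSucc := by
  simp only [le_minAscentTop_iff, Fin.forall_fin_succ', Fin.snoc_castSucc, Fin.snoc_last,
    Function.comp_apply, Fin.castSucc_lt_castSucc_iff, Fin.castSucc_lt_last,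
    Fin.succAbove_lt_succAbove_iff, Fin.succAbove_lt_iff_castSucc_lt, not_lt_of_ge (Fin.le_last _)]
  grind

theorem minAscentTop_snoc_zero (f : Fin k → Fin n) :
    minAscentTop (Fin.snoc (Fin.succ ∘ f) 0 : Fin (k + 1) → Fin (n + 1)) =
      (minAscentTop f).succ := by
  rw [← Fin.succAbove_zero]
  refine eq_of_forall_le_iff fun w ↦ ?_
  cases w using Fin.cases with
  | zero => simp
  | succ w =>
    rw [le_minAscentTop_snoc_iff, Fin.succ_le_succ_iff, le_minAscentTop_iff]
    simp

theorem minAscentTop_snoc_of_le {f : Fin k → Fin n} {v : Fin (n + 1)} (hv : v ≤ minAscentTop f)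
    (hlt : ∃ i, (f i).castSucc < v) :
    minAscentTop (Fin.snoc (v.succAbove ∘ f) v : Fin (k + 1) → Fin (n + 1)) = v.castSucc := by
  refine eq_of_forall_le_iff fun w ↦ le_minAscentTop_snoc_iff.trans ?_
  refine ⟨fun h ↦ hlt.elim h.2, fun hw ↦ ⟨fun i j hij hf ↦ ?_, fun _ _ ↦ hw⟩⟩
  have htop : v ≤ (f j).castSucc := le_minAscentTop_iff.1 hv i j hij hf
  exact hw.trans ((Fin.lt_succAbove_iff_le_castSucc ..).2 htop).le

end MinAscentTop

section InsertPerm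

variable {n : ℕ}

/-- The permutation whose one-line notation is that of `σ` with the value `v` inserted at position
`p`, the values of `σ` that are at least `v` being raised by one. -/
def insertPerm (p v : Fin (n + 1)) (σ : Equiv.Perm (Fin n)) : Equiv.Perm (Fin (n + 1)) :=
  (finSuccEquiv' p).trans ((Equiv.optionCongr σ).trans (finSuccEquiv' v).symm)

theorem coe_insertPerm (p v : Fin (n + 1)) (σ : Equiv.Perm (Fin n)) :
    ⇑(insertPerm p v σ) = p.insertNth v (v.succAbove ∘ σ) := by
  refine Fin.eq_insertNth_iff.2 ⟨by simp [insertPerm], funext fun i ↦ ?_⟩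
  simp [insertPerm, Fin.removeNth]

theorem coe_insertPerm_last (v : Fin (n + 1)) (σ : Equiv.Perm (Fin n)) :
    ⇑(insertPerm (Fin.last n) v σ) = Fin.snoc (v.succAbove ∘ σ) v := by
  rw [coe_insertPerm, Fin.insertNth_last']

theorem insertPerm_injective2 (p : Fin (n + 1)) : Function.Injective2 (insertPerm p) := by
  intro v w σ τ h
  obtain ⟨rfl, hcomp⟩ : v = w ∧ v.succAbove ∘ σ = w.succAbove ∘ τ := by
    simpa [coe_insertPerm, Fin.insertNth_inj] using congrArg DFunLike.coe h
  exact ⟨rfl, DFunLike.coe_injective (Fin.succAbove_right_injective.comp_left hcomp)⟩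

theorem exists_insertPerm_eq (p : Fin (n + 1)) (π : Equiv.Perm (Fin (n + 1))) :
    ∃ v σ, insertPerm p v σ = π := by
  have hbij : Function.Bijective (Function.uncurry (insertPerm p)) :=
    (Fintype.bijective_iff_injective_and_card _).2
      ⟨(insertPerm_injective2 p).uncurry, by simp [Fintype.card_perm, Nat.factorial_succ]⟩
  simpa using hbij.surjective π

theorem avoids123_insertPerm_last_iff {v : Fin (n + 1)} {σ : Equiv.Perm (Fin n)} :
    Avoids123 (insertPerm (Fin.last n) v σ) ↔ Avoids123 σ ∧ v ≤ minAscentTop σ := by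
  simp only [coe_insertPerm_last, avoids123_snoc_iff,
    avoids123_strictMono_comp_iff (Fin.strictMono_succAbove v), le_minAscentTop_iff,
    Function.comp_apply, Fin.succAbove_lt_succAbove_iff, (Fin.succAbove_ne v _).symm.le_iff_lt,
    Fin.lt_succAbove_iff_le_castSucc]

theorem minAscentTop_insertPerm_last_zero (σ : Equiv.Perm (Fin n)) :
    minAscentTop (insertPerm (Fin.last n) 0 σ) = (minAscentTop σ).succ := by
  rw [coe_insertPerm_last, Fin.succAbove_zero, minAscentTop_snoc_zero]

theorem minAscentTop_insertPerm_last {v : Fin (n + 1)} {σ : Equiv.Perm (Fin n)} (hv₀ : v ≠ 0)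
    (hv : v ≤ minAscentTop σ) : minAscentTop (insertPerm (Fin.last n) v σ) = v.castSucc := by
  rw [coe_insertPerm_last]
  refine minAscentTop_snoc_of_le hv ?_
  have hn : 0 < n := by grind
  exact ⟨σ.symm ⟨0, hn⟩, by simpa using Fin.pos_iff_ne_zero.2 hv₀⟩

theorem avoids123_insertPerm_penultimate_and_ascent_iff {v : Fin (n + 2)}
    {σ : Equiv.Perm (Fin (n + 1))} :
    (Avoids123 (insertPerm (Fin.last n).castSucc v σ) ∧
      insertPerm (Fin.last n).castSucc v σ (Fin.last n).castSucc <
        insertPerm (Fin.last n).castSucc v σ (Fin.last (n + 1))) ↔ v = 0 ∧ Avoids123 σ := by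
  set p := (Fin.last n).castSucc
  have hp : insertPerm p v σ p = v := by simp [coe_insertPerm]
  have havoid : Avoids123 (insertPerm p 0 σ) ↔ Avoids123 σ := by
    rw [coe_insertPerm, avoids123_insertNth_penultimate_iff fun _ ↦ Fin.zero_le _,
      avoids123_strictMono_comp_iff (Fin.strictMono_succAbove 0)]
  constructor
  · rintro ⟨h, hasc⟩
    obtain ⟨i, hi⟩ := (insertPerm p v σ).surjective 0
    have hv : v = 0 := Fin.le_zero_iff.1 <| hp ▸ hi ▸ h.penultimate_le hasc i
    exact ⟨hv, havoid.1 (hv ▸ h)⟩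
  · rintro ⟨rfl, hσ⟩
    refine ⟨havoid.2 hσ, hp.trans_lt (Fin.pos_iff_ne_zero.2 fun h ↦ ?_)⟩
    exact (Fin.castSucc_lt_last (Fin.last n)).ne ((insertPerm p 0 σ).injective (hp.trans h.symm))

end InsertPerm

section GeneratingTree

/-- The number of nodes `m` levels below a node with label `h`, in the generating tree where a node
labelled `h` has children labelled `1, …, h` and `h + 1`. -/
def descendantCount : ℕ → ℕ → ℕ
  | 0, _ => 1
  | m + 1, h => descendantCount m (h + 1) + ∑ j ∈ Finset.range h, descendantCount m (j + 1)

theorem descendantCount_succ_zero (m : ℕ) :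
    descendantCount (m + 1) 0 = descendantCount m 1 := by
  simp [descendantCount]

theorem descendantCount_succ_succ (m h : ℕ) : descendantCount (m + 1) (h + 1) =
    descendantCount (m + 1) h + descendantCount m (h + 2) := by
  simp only [descendantCount, Finset.sum_range_succ]
  ring

/-- The ballot numbers, in additive form to avoid truncated subtraction. -/
theorem descendantCount_add_choose (m h : ℕ) :
    descendantCount (m + 1) h + (2 * m + 2 + h).choose m = (2 * m + 2 + h).choose (m + 1) := by
  induction m generalizing h with
  | zero => simp [descendantCount, add_comm, add_left_comm]
  | succ m ihm =>
    induction h with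
    | zero =>
      have hsymm : (2 * m + 3).choose (m + 2) = (2 * m + 3).choose (m + 1) :=
        Nat.choose_symm_of_eq_add (by ring)
      have := ihm 1
      grind [descendantCount_succ_zero, Nat.choose_succ_succ']
    | succ h ihh =>
      have := ihm (h + 2)
      grind [descendantCount_succ_succ, Nat.choose_succ_succ']

theorem catalan_succ_add_choose (m : ℕ) :
    catalan (m + 1) + (2 * m + 2).choose m = (2 * m + 2).choose (m + 1) := by
  have hcatalan : (m + 2) * catalan (m + 1) = (2 * m + 2).choose (m + 1) :=
    succ_mul_catalan_eq_centralBinom (m + 1)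
  have hchoose : (2 * m + 2).choose (m + 1) * (m + 1) = (2 * m + 2).choose m * (m + 2) := by
    rw [Nat.choose_succ_right_eq, show 2 * m + 2 - m = m + 2 by lia]
  refine Nat.eq_of_mul_eq_mul_left (Nat.succ_pos (m + 1)) ?_
  calc (m + 2) * (catalan (m + 1) + (2 * m + 2).choose m)
      = (2 * m + 2).choose (m + 1) + (2 * m + 2).choose (m + 1) * (m + 1) := by
        rw [mul_add, hcatalan, hchoose, mul_comm (m + 2) (Nat.choose _ _)]
    _ = (m + 2) * (2 * m + 2).choose (m + 1) := by ring

theorem descendantCount_zero_right (n : ℕ) : descendantCount n 0 = catalan n := by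
  cases n with
  | zero => simp [descendantCount]
  | succ m =>
    exact Nat.add_right_cancel
      ((descendantCount_add_choose m 0).trans (catalan_succ_add_choose m).symm)

end GeneratingTree

section Counting

open Finset

open Classical in
/-- The finite set of 123-avoiding permutations of length `n`. -/
noncomputable def avoiders123 (n : ℕ) : Finset (Equiv.Perm (Fin n)) :=
  univ.filter fun π ↦ Avoids123 π

@[simp]
theorem mem_avoiders123 {n : ℕ} {π : Equiv.Perm (Fin n)} : π ∈ avoiders123 n ↔ Avoids123 π := by
  simp [avoiders123]

variable {M : Type*} [AddCommMonoid M]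

theorem sum_avoiders123_succ {n : ℕ} (F : Equiv.Perm (Fin (n + 1)) → M) :
    ∑ π ∈ avoiders123 (n + 1), F π =
      ∑ σ ∈ avoiders123 n, ∑ v ∈ Iic (minAscentTop σ), F (insertPerm (Fin.last n) v σ) := by
  rw [sum_sigma']
  refine (sum_bij (fun x _ ↦ insertPerm (Fin.last n) x.2 x.1) ?_ ?_ ?_ fun _ _ ↦ rfl).symm
  · rintro ⟨σ, v⟩ h
    simpa [avoids123_insertPerm_last_iff] using h
  · rintro ⟨σ, v⟩ - ⟨τ, w⟩ - h
    obtain ⟨rfl, rfl⟩ := insertPerm_injective2 _ h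
    rfl
  · intro π hπ
    obtain ⟨v, σ, rfl⟩ := exists_insertPerm_eq (Fin.last n) π
    exact ⟨⟨σ, v⟩, by simpa [avoids123_insertPerm_last_iff] using hπ, rfl⟩

theorem sum_Iic_minAscentTop_insertPerm_last {n : ℕ} (σ : Equiv.Perm (Fin n)) (w : ℕ → M) :
    ∑ v ∈ Iic (minAscentTop σ), w (minAscentTop (insertPerm (Fin.last n) v σ)) =
      w (minAscentTop σ + 1) + ∑ j ∈ range (minAscentTop σ), w (j + 1) := by
  set t := minAscentTop σ
  have hlabel : ∀ v ∈ Iic t, w (minAscentTop (insertPerm (Fin.last n) v σ)) =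
      if (v : ℕ) = 0 then w (t + 1) else w v := by
    intro v hv
    split_ifs with hv₀
    · obtain rfl : v = 0 := Fin.ext hv₀
      rw [minAscentTop_insertPerm_last_zero, Fin.val_succ]
    · rw [minAscentTop_insertPerm_last (fun h ↦ hv₀ (by simp [h])) (mem_Iic.1 hv),
        Fin.val_castSucc]
  calc
    _ = ∑ v ∈ Iic t, if (v : ℕ) = 0 then w (t + 1) else w v := sum_congr rfl hlabel
    _ = ∑ x ∈ range (t + 1), if x = 0 then w (t + 1) else w x := by
      rw [Nat.range_succ_eq_Iic, ← Fin.map_valEmbedding_Iic, sum_map]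
      rfl
    _ = _ := by simp [sum_range_succ', add_comm (w _)]

theorem sum_avoiders123_descendantCount (n m : ℕ) :
    ∑ π ∈ avoiders123 n, descendantCount m (minAscentTop π) = descendantCount (m + n) 0 := by
  induction n generalizing m with
  | zero =>
    have huniv : avoiders123 0 = univ :=
      eq_univ_iff_forall.2 fun π ↦ mem_avoiders123.2 fun i ↦ i.elim0
    simp [huniv]
  | succ n ih =>
    calc
      _ = ∑ σ ∈ avoiders123 n, descendantCount (m + 1) (minAscentTop σ) := by
        simp only [sum_avoiders123_succ fun π ↦ descendantCount m (minAscentTop π),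
          sum_Iic_minAscentTop_insertPerm_last, descendantCount]
      _ = descendantCount (m + (n + 1)) 0 := by rw [ih, Nat.add_right_comm, add_assoc]

theorem card_avoiders123 (n : ℕ) : #(avoiders123 n) = catalan n := by
  simpa [descendantCount, descendantCount_zero_right] using sum_avoiders123_descendantCount n 0

theorem card_avoiders123_ascent (n : ℕ) :
    #{π ∈ avoiders123 (n + 2) | π (Fin.last n).castSucc < π (Fin.last (n + 1))} =
      catalan (n + 1) := by
  rw [← card_avoiders123]
  refine (card_bij (fun σ _ ↦ insertPerm (Fin.last n).castSucc 0 σ) ?_ ?_ ?_).symm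
  · intro σ hσ
    simpa [avoids123_insertPerm_penultimate_and_ascent_iff] using hσ
  · exact fun σ _ τ _ h ↦ (insertPerm_injective2 _ h).2
  · intro π hπ
    obtain ⟨v, σ, rfl⟩ := exists_insertPerm_eq (Fin.last n).castSucc π
    obtain ⟨rfl, hσ⟩ : v = 0 ∧ Avoids123 σ := by
      simpa [avoids123_insertPerm_penultimate_and_ascent_iff] using hπ
    exact ⟨σ, mem_avoiders123.2 hσ, rfl⟩

theorem card_avoiders123_descent_add (n : ℕ) :
    #{π ∈ avoiders123 (n + 2) | π (Fin.last (n + 1)) < π (Fin.last n).castSucc} +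
      catalan (n + 1) = catalan (n + 2) := by
  have hne (π : Equiv.Perm (Fin (n + 2))) : π (Fin.last n).castSucc ≠ π (Fin.last (n + 1)) :=
    π.injective.ne (Fin.castSucc_lt_last _).ne
  have hnot (π : Equiv.Perm (Fin (n + 2))) : ¬ π (Fin.last n).castSucc < π (Fin.last (n + 1)) ↔
      π (Fin.last (n + 1)) < π (Fin.last n).castSucc := not_lt.trans (hne π).symm.le_iff_lt
  simp only [← hnot]
  rw [← card_avoiders123_ascent, ← card_avoiders123, add_comm, card_filter_add_card_filter_not]

end Counting

/-- The number of 123-avoiding permutations of length `n ≥ 2` ending with a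
descent is `C_n - C_(n-1)`. -/
theorem avoid123_descent_count (n : ℕ) (hn : 2 ≤ n) :
    {π : Equiv.Perm (Fin n) | occ123 π = 0 ∧
        π ⟨n - 1, by omega⟩ < π ⟨n - 2, by omega⟩}.ncard
      = catalan n - catalan (n - 1) := by
  obtain ⟨m, rfl⟩ : ∃ m, n = m + 2 := ⟨n - 2, by omega⟩
  have hset : {π : Equiv.Perm (Fin (m + 2)) | occ123 π = 0 ∧
      π (Fin.last (m + 1)) < π (Fin.last m).castSucc} =
        ({π ∈ avoiders123 (m + 2) | π (Fin.last (m + 1)) < π (Fin.last m).castSucc} :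
          Finset (Equiv.Perm (Fin (m + 2)))) := by
    ext π
    simp [occ123_eq_zero_iff]
  refine (congrArg Set.ncard hset).trans ?_
  rw [Set.ncard_coe_finset]
  exact Nat.eq_sub_of_add_eq (card_avoiders123_descent_add m)
end

section
/- A permutation π that avoids the classical pattern 123 fails to end with a descent if and only if n = 1 or the value 1 occupies position n−1 in π. -/
theorem occ1_23_le_occ123 {n : ℕ} (π : Equiv.Perm (Fin n)) : occ1_23 π ≤ occ123 π :=
  Finset.card_le_card <| Finset.monotone_filter_right _
    fun _ _ ⟨hij, hjk, _, hπij, hπjk⟩ => ⟨hij, hjk, hπij, hπjk⟩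

theorem ascent_bottom_le_of_lt {n : ℕ} {π : Equiv.Perm (Fin n)} (hπ : occ1_23 π = 0)
    {i j k : Fin n} (hij : i < j) (hjk : (k : ℕ) = j + 1) (hasc : π j < π k) : π j ≤ π i := by
  rw [occ1_23, Finset.card_eq_zero, Finset.filter_eq_empty_iff] at hπ
  have hlt : j < k := by omega
  by_contra! hsmaller
  exact hπ (Finset.mem_univ (i, j, k)) ⟨hij, hlt, hjk, hsmaller, hasc⟩

theorem final_ascent_bottom_le {n : ℕ} {π : Equiv.Perm (Fin n)} (hπ : occ1_23 π = 0)
    {j k : Fin n} (hjk : (k : ℕ) = j + 1) (hk : (k : ℕ) + 1 = n) (hasc : π j < π k) (i : Fin n) :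
    π j ≤ π i := by
  rcases lt_trichotomy i j with hij | rfl | hji
  · exact ascent_bottom_le_of_lt hπ hij hjk hasc
  · exact le_rfl
  · obtain rfl : i = k := by omega
    exact hasc.le

theorem avoid123_no_descent_iff_general (n : ℕ) (hn : 1 ≤ n) (π : Equiv.Perm (Fin n))
    (hπ : occ1_23 π = 0) :
    ¬ (π ⟨n - 1, Nat.sub_lt hn one_pos⟩ < π ⟨n - 2, Nat.sub_lt hn two_pos⟩) ↔
      n = 1 ∨ π ⟨n - 2, Nat.sub_lt hn two_pos⟩ = ⟨0, hn⟩ := by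
  constructor
  · intro hdesc
    refine or_iff_not_imp_left.mpr fun hn1 => ?_
    have hasc : π ⟨n - 2, Nat.sub_lt hn two_pos⟩ < π ⟨n - 1, Nat.sub_lt hn one_pos⟩ :=
      (not_lt.mp hdesc).lt_of_ne (π.injective.ne (by grind))
    have hmin (i : Fin n) : π ⟨n - 2, Nat.sub_lt hn two_pos⟩ ≤ π i :=
      final_ascent_bottom_le hπ (by grind) (by grind) hasc i
    have hle_zero := hmin (π.symm ⟨0, hn⟩)
    rw [π.apply_symm_apply] at hle_zero
    exact le_antisymm hle_zero (Nat.zero_le _)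
  · rintro (rfl | hzero)
    · exact lt_irrefl _
    · rw [hzero]
      exact Nat.not_lt_zero _

/-- A 123-avoiding permutation fails to end with a descent iff `n = 1` or the
value `1` (i.e. `0 : Fin n`) occupies position `n - 1` (the second-to-last,
`0`-indexed `n - 2`). -/
theorem avoid123_no_descent_iff (n : ℕ) (hn : 1 ≤ n) (π : Equiv.Perm (Fin n))
    (havoid : occ123 π = 0) :
    ¬ (π ⟨n - 1, by omega⟩ < π ⟨n - 2, by omega⟩) ↔
      n = 1 ∨ π ⟨n - 2, by omega⟩ = ⟨0, by omega⟩ :=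
  avoid123_no_descent_iff_general n hn π (Nat.le_zero.mp (havoid ▸ occ1_23_le_occ123 π))
end

section
/- For n ≥ 3, the number of permutations of length n containing exactly one occurrence of the vincular pattern 1-23 and exactly one occurrence of the classical pattern 1-2-3 equals (5/(n+2)) * C(2n-2, n+1). -/
/-!
Build permutations by appending a last entry. An occurrence of 1-2-3 in `snoc π z` is one in `π`, or
an occurrence of 12 in `π` with values below `z` followed by `z`; so one tracks the number
`occ12Below π u` of occurrences of 12 with values below a threshold `u`, which itself evolves simply
under `snoc`. Refined by the condition that the values below `u` are decreasing
(`occ12Below π u = 0`), the number of 123-avoiders satisfies the recurrence of the ballot numbers.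
For the permutations to be counted, either the first `n` entries already contain the occurrence, or
the occurrence uses the last two entries `y`, `z`; then `y` is the second smallest value of the
first `n` entries and deleting it as well leaves a 123-avoider. This adds one ballot number to the
recurrence at threshold `1`, and the solution is again a ballot number, shifted by `(1, 3)`.
-/

namespace PermPattern

open Finset Equiv

variable {n : ℕ}

lemma card_filter_const_and {α : Type*} [Fintype α] (p : Prop) [Decidable p] (q : α → Prop)
    [DecidablePred q] : #{a | p ∧ q a} = if p then #{a | q a} else 0 := by
  split_ifs with h <;> simp [h]

lemma card_filter_or_of_disjoint {α : Type*} [Fintype α] {p q : α → Prop}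
    [DecidablePred p] [DecidablePred q] (h : ∀ a, p a → ¬ q a) :
    #{a | p a ∨ q a} = #{a | p a} + #{a | q a} := by
  classical
  rw [filter_or, card_union_of_disjoint (disjoint_filter.2 fun a _ ↦ h a)]

lemma sum_ite_lt_add_ite_eq_zero {M : Type*} [AddCommMonoid M] (f : ℕ → M) {u : ℕ} (hu : u ≤ n) :
    ∑ z : Fin (n + 1), ((if u < z then f z else 0) + if (z : ℕ) = 0 then f u else 0) =
      ∑ z ∈ Ico u (n + 1), f z := by
  have hfilter : {z ∈ range (n + 1) | u < z} = Ico (u + 1) (n + 1) := by grind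
  rw [Fin.sum_univ_eq_sum_range fun z ↦ (if u < z then f z else 0) + if z = 0 then f u else 0,
    sum_add_distrib, ← sum_filter, hfilter, sum_ite_eq', if_pos (by simp),
    sum_eq_sum_Ico_succ_bot (Nat.lt_succ_of_le hu), add_comm]

/-- The ballot number `C(2n - u, n) - C(2n - u, n + 1)`, for `u ≤ 2n`. It vanishes for
`0 < n < u`, also in the range `2n < u` where the subtraction truncates. -/
def ballot (n u : ℕ) : ℤ := (2 * n - u).choose n - (2 * n - u).choose (n + 1)

lemma ballot_eq_zero {u : ℕ} (hn : 0 < n) (hu : n < u) : ballot n u = 0 := by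
  simp [ballot, Nat.choose_eq_zero_of_lt, show 2 * n - u < n by omega,
    show 2 * n - u < n + 1 by omega]

lemma ballot_succ_succ {u : ℕ} (hu : u ≤ 2 * n) :
    ballot (n + 1) (u + 1) = ballot n u + ballot (n + 1) (u + 2) := by
  rw [ballot, ballot, ballot, show 2 * (n + 1) - (u + 1) = 2 * n - u + 1 by omega,
    show 2 * (n + 1) - (u + 2) = 2 * n - u by omega, Nat.choose_succ_succ, Nat.choose_succ_succ]
  push_cast
  ring

lemma ballot_succ_zero (n : ℕ) : ballot (n + 1) 0 = ballot (n + 1) 1 := by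
  have hsymm : (2 * n + 1).choose n = (2 * n + 1).choose (n + 1) :=
    Nat.choose_symm_of_eq_add (by omega)
  rw [ballot, ballot, show 2 * (n + 1) - 0 = 2 * n + 1 + 1 by omega,
    show 2 * (n + 1) - 1 = 2 * n + 1 by omega, Nat.choose_succ_succ _ n,
    Nat.choose_succ_succ _ (n + 1), hsymm]
  push_cast
  ring

lemma sum_Ico_ballot {u m : ℕ} (hum : u ≤ m) (hnm : n < m) (hm : m ≤ 2 * n + 1) :
    ∑ z ∈ Ico u m, ballot n z = ballot (n + 1) (u + 1) := by
  calc
    ∑ z ∈ Ico u m, ballot n z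
      = ∑ z ∈ Ico u m, (-ballot (n + 1) (z + 1 + 1) - -ballot (n + 1) (z + 1)) := by
        refine sum_congr rfl fun z hz ↦ ?_
        have hz' : z ≤ 2 * n := by grind
        linear_combination -ballot_succ_succ hz'
    _ = -ballot (n + 1) (m + 1) - -ballot (n + 1) (u + 1) :=
        sum_Ico_sub (fun z ↦ -ballot (n + 1) (z + 1)) hum
    _ = ballot (n + 1) (u + 1) := by
        rw [ballot_eq_zero n.succ_pos (by omega)]
        ring

lemma sum_Ico_ballot_max_one_add_three {v : ℕ} (hn : 0 < n) (hv : v ≤ n) :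
    ∑ z ∈ Ico v (n + 1), ballot (n + 1) (max z 1 + 3) + (if v = 0 then ballot n 2 else 0) =
      ballot (n + 2) (v + 4) := by
  have htail {w : ℕ} (hw : 1 ≤ w) (hwn : w ≤ n + 1) :
      ∑ z ∈ Ico w (n + 1), ballot (n + 1) (max z 1 + 3) = ballot (n + 2) (w + 4) := by
    rw [← sum_Ico_ballot (u := w + 3) (m := n + 1 + 3) (by omega) (by omega) (by omega),
      ← sum_Ico_add']
    exact sum_congr rfl fun z hz ↦ by rw [max_eq_left (by grind)]
  rcases v.eq_zero_or_pos with rfl | hv'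
  · have hrec₁ : ballot (n + 1) 3 = ballot n 2 + ballot (n + 1) 4 := ballot_succ_succ (by omega)
    have hrec₂ : ballot (n + 2) 4 = ballot (n + 1) 3 + ballot (n + 2) 5 :=
      ballot_succ_succ (by omega)
    rw [sum_eq_sum_Ico_succ_bot (by omega), htail (by omega) (by omega), if_pos rfl]
    simp only [zero_le, sup_of_le_right, zero_add, Nat.reduceAdd]
    linear_combination -hrec₁ - hrec₂
  · rw [htail hv' (by omega), if_neg hv'.ne', add_zero]

lemma succ_mul_ballot {u : ℕ} (hu : u ≤ n) :
    (n + 1) * ballot n u = (u + 1) * (2 * n - u).choose n := by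
  have habsorb := Nat.choose_succ_right_eq (2 * n - u) n
  rw [show 2 * n - u - n = n - u by omega] at habsorb
  zify [hu] at habsorb
  rw [ballot]
  linear_combination -habsorb

/-- The permutation of length `n + 1` that ends in `z` and whose first `n` entries are in the same
relative order as those of `π`. -/
def snoc (π : Perm (Fin n)) (z : Fin (n + 1)) : Perm (Fin (n + 1)) :=
  (finSuccEquiv' (Fin.last n)).trans ((optionCongr π).trans (finSuccEquiv' z).symm)

@[simp]
lemma snoc_last (π : Perm (Fin n)) (z : Fin (n + 1)) : snoc π z (Fin.last n) = z := by
  simp [snoc]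

@[simp]
lemma snoc_castSucc (π : Perm (Fin n)) (z : Fin (n + 1)) (i : Fin n) :
    snoc π z i.castSucc = z.succAbove (π i) := by
  simp [snoc, finSuccEquiv'_last_apply_castSucc]

lemma snoc_bijective :
    Function.Bijective fun p : Perm (Fin n) × Fin (n + 1) ↦ snoc p.1 p.2 := by
  rw [Fintype.bijective_iff_injective_and_card]
  refine ⟨fun ⟨π, z⟩ ⟨ρ, w⟩ h ↦ ?_, by simp [Fintype.card_perm, Nat.factorial_succ, mul_comm]⟩
  obtain rfl : z = w := by simpa using DFunLike.congr_fun h (Fin.last n)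
  suffices π = ρ by rw [this]
  ext i : 1
  simpa using DFunLike.congr_fun h i.castSucc

lemma card_filter_perm_succ (P : Perm (Fin (n + 1)) → Prop) [DecidablePred P] :
    #{π | P π} = ∑ z, #{π | P (snoc π z)} := by
  simp only [card_filter]
  rw [← snoc_bijective.sum_comp, Fintype.sum_prod_type_right]

lemma card_filter_perm_lt (π : Perm (Fin n)) {b : ℕ} (hb : b ≤ n) :
    #{i | (π i : ℕ) < b} = b := by
  rw [card_filter, Equiv.sum_comp π fun x ↦ if (x : ℕ) < b then 1 else 0, ← card_filter,
    Fin.card_filter_val_lt, min_eq_right hb]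

lemma succAbove_lt_self_iff (z : Fin (n + 1)) (x : Fin n) : z.succAbove x < z ↔ (x : ℕ) < z :=
  z.succAbove_lt_iff_castSucc_lt x

lemma val_succAbove_lt_iff (z : Fin (n + 1)) (x : Fin n) (u : ℕ) :
    (z.succAbove x : ℕ) < u ↔ if u ≤ z then (x : ℕ) < u else (x : ℕ) < u - 1 := by
  grind [Fin.succAbove, Fin.lt_def]

lemma card_filter_pairs_succ (R : Fin (n + 1) → Fin (n + 1) → Prop) [∀ i j, Decidable (R i j)] :
    #{t : Fin (n + 1) × Fin (n + 1) | t.1 < t.2 ∧ R t.1 t.2} =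
      #{t : Fin n × Fin n | t.1 < t.2 ∧ R t.1.castSucc t.2.castSucc} +
      #{i : Fin n | R i.castSucc (Fin.last n)} := by
  simp [card_filter, Fintype.sum_prod_type, Fin.sum_univ_castSucc, sum_add_distrib,
    Fin.castSucc_lt_last, (Fin.le_last _).not_gt, -sum_boole]

lemma card_filter_triples_succ (R : Fin (n + 1) → Fin (n + 1) → Fin (n + 1) → Prop)
    [∀ i j k, Decidable (R i j k)] :
    #{t : Fin (n + 1) × Fin (n + 1) × Fin (n + 1) |
        t.1 < t.2.1 ∧ t.2.1 < t.2.2 ∧ R t.1 t.2.1 t.2.2} =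
      #{t : Fin n × Fin n × Fin n |
        t.1 < t.2.1 ∧ t.2.1 < t.2.2 ∧ R t.1.castSucc t.2.1.castSucc t.2.2.castSucc} +
      #{t : Fin n × Fin n | t.1 < t.2 ∧ R t.1.castSucc t.2.castSucc (Fin.last n)} := by
  simp [card_filter, Fintype.sum_prod_type, Fin.sum_univ_castSucc, sum_add_distrib,
    Fin.castSucc_lt_last, (Fin.le_last _).not_gt, -sum_boole]

/-- Number of occurrences of the pattern 12 in `π` formed by values smaller than `u`. Values are
counted from `0`. -/
def occ12Below (π : Perm (Fin n)) (u : ℕ) : ℕ :=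
  #{t : Fin n × Fin n | t.1 < t.2 ∧ π t.1 < π t.2 ∧ (π t.2 : ℕ) < u}

/-- Number of occurrences of the pattern 12 in `π` that are formed by values smaller than `u` and
use the last entry of `π`: appending an entry `u` turns exactly these into occurrences of 1-23. -/
def occ12EndBelow (π : Perm (Fin n)) (u : ℕ) : ℕ :=
  #{t : Fin n × Fin n | t.1 < t.2 ∧ n = t.2 + 1 ∧ π t.1 < π t.2 ∧ (π t.2 : ℕ) < u}

lemma occ12Below_mono (π : Perm (Fin n)) : Monotone (occ12Below π) := fun _ _ h ↦
  card_le_card <| monotone_filter_right _ fun _ _ ⟨hpos, hval, hlt⟩ ↦ ⟨hpos, hval, hlt.trans_le h⟩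

lemma occ12Below_eq_zero_of_le_one (π : Perm (Fin n)) {u : ℕ} (hu : u ≤ 1) :
    occ12Below π u = 0 := by
  simp only [occ12Below, card_eq_zero, filter_eq_empty_iff]
  grind

lemma occ12EndBelow_le_occ12Below (π : Perm (Fin n)) (u : ℕ) :
    occ12EndBelow π u ≤ occ12Below π u :=
  card_le_card <| monotone_filter_right _ fun _ _ ⟨hpos, _, hval⟩ ↦ ⟨hpos, hval⟩

lemma occ1_23_le_occ123 (π : Perm (Fin n)) : occ1_23 π ≤ occ123 π :=
  card_le_card <| monotone_filter_right _ fun _ _ ⟨hpos, hpos', _, hval⟩ ↦ ⟨hpos, hpos', hval⟩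

lemma occ123_snoc (π : Perm (Fin n)) (z : Fin (n + 1)) :
    occ123 (snoc π z) = occ123 π + occ12Below π z := by
  simp [occ123, occ12Below, succAbove_lt_self_iff, card_filter_triples_succ fun i j k ↦
    snoc π z i < snoc π z j ∧ snoc π z j < snoc π z k]

lemma occ1_23_snoc (π : Perm (Fin n)) (z : Fin (n + 1)) :
    occ1_23 (snoc π z) = occ1_23 π + occ12EndBelow π z := by
  simp [occ1_23, occ12EndBelow, succAbove_lt_self_iff, card_filter_triples_succ fun i j k ↦
    (k : ℕ) = j + 1 ∧ snoc π z i < snoc π z j ∧ snoc π z j < snoc π z k]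

lemma occ12Below_snoc (π : Perm (Fin n)) (z : Fin (n + 1)) (u : ℕ) :
    occ12Below (snoc π z) u = if u ≤ z then occ12Below π u else occ12Below π (u - 1) + z := by
  have hcard := card_filter_perm_lt π z.is_le
  rw [occ12Below, card_filter_pairs_succ fun i j ↦ snoc π z i < snoc π z j ∧ (snoc π z j : ℕ) < u]
  split_ifs with h
  · simp [occ12Below, val_succAbove_lt_iff, succAbove_lt_self_iff, h, h.not_gt]
  · simp [occ12Below, val_succAbove_lt_iff, succAbove_lt_self_iff, h, not_le.1 h, hcard]

lemma occ12EndBelow_snoc (π : Perm (Fin n)) (z : Fin (n + 1)) (u : ℕ) :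
    occ12EndBelow (snoc π z) u = if z < u then (z : ℕ) else 0 := by
  have hcard := card_filter_perm_lt π z.is_le
  rw [occ12EndBelow, card_filter_pairs_succ fun i j ↦
    n + 1 = j + 1 ∧ snoc π z i < snoc π z j ∧ (snoc π z j : ℕ) < u]
  split_ifs with h <;> simp [succAbove_lt_self_iff, ne_of_gt, h, hcard]

lemma occ12Below_two_pos_of_occ12EndBelow_eq_one (π : Perm (Fin n)) {z : ℕ}
    (h : occ12EndBelow π z = 1) : 0 < occ12Below π 2 := by
  cases n with
  | zero => simp [occ12EndBelow] at h
  | succ n =>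
    obtain ⟨⟨ρ, b⟩, rfl⟩ := snoc_bijective.surjective π
    have hb : (b : ℕ) = 1 := by grind [occ12EndBelow_snoc]
    simp [occ12Below_snoc, hb]

lemma snoc_avoids_iff (π : Perm (Fin n)) (z : Fin (n + 1)) (u : ℕ) :
    occ123 (snoc π z) = 0 ∧ occ12Below (snoc π z) (u + 1) = 0 ↔
      u < z ∧ occ123 π = 0 ∧ occ12Below π z = 0 ∨
      (z : ℕ) = 0 ∧ occ123 π = 0 ∧ occ12Below π u = 0 := by
  have hmono (h : u + 1 ≤ z) := occ12Below_mono π h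
  have hzero (h : (z : ℕ) ≤ 1) := occ12Below_eq_zero_of_le_one π h
  rw [occ123_snoc, occ12Below_snoc]
  split_ifs <;> grind

lemma snoc_final_iff (ρ : Perm (Fin n)) (b : Fin (n + 1)) (z : ℕ) :
    occ123 (snoc ρ b) = 0 ∧ occ12Below (snoc ρ b) z = 1 ∧ occ12EndBelow (snoc ρ b) z = 1 ↔
      (b : ℕ) = 1 ∧ 2 ≤ z ∧ occ123 ρ = 0 ∧ occ12Below ρ (z - 1) = 0 := by
  have hzero (h : (b : ℕ) ≤ 1) := occ12Below_eq_zero_of_le_one ρ h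
  rw [occ123_snoc, occ12Below_snoc, occ12EndBelow_snoc]
  split_ifs <;> grind

lemma snoc_single_iff (π : Perm (Fin n)) (z : Fin (n + 1)) (u : ℕ) :
    (occ1_23 (snoc π z) = 1 ∧ occ123 (snoc π z) = 1) ∧ occ12Below (snoc π z) (u + 1) = 0 ↔
      (u < z ∧ (occ1_23 π = 1 ∧ occ123 π = 1) ∧ occ12Below π z = 0 ∨
        (z : ℕ) = 0 ∧ (occ1_23 π = 1 ∧ occ123 π = 1) ∧ occ12Below π u = 0) ∨
      u = 0 ∧ occ123 π = 0 ∧ occ12Below π z = 1 ∧ occ12EndBelow π z = 1 := by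
  have hmono (h : u + 1 ≤ z) := occ12Below_mono π h
  have hmono_two (h : 2 ≤ u + 1) := occ12Below_mono π h
  have hzero {v : ℕ} (h : v ≤ 1) := occ12Below_eq_zero_of_le_one π h
  have hvincular := occ1_23_le_occ123 π
  have hend := occ12EndBelow_le_occ12Below π z
  have hfinal := occ12Below_two_pos_of_occ12EndBelow_eq_one π (z := z)
  rw [occ123_snoc, occ1_23_snoc, occ12Below_snoc]
  split_ifs <;> grind

/-- Number of 1-2-3-avoiding permutations of length `n` in which the values smaller than `u` appear
in decreasing order. -/
def avoidCount (n u : ℕ) : ℕ := #{π : Perm (Fin n) | occ123 π = 0 ∧ occ12Below π u = 0}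

/-- Number of permutations of length `n` with exactly one occurrence of 1-23 and of 1-2-3 in which
the values smaller than `u` appear in decreasing order. -/
def singleCount (n u : ℕ) : ℕ :=
  #{π : Perm (Fin n) | (occ1_23 π = 1 ∧ occ123 π = 1) ∧ occ12Below π u = 0}

/-- Number of permutations of length `n` that avoid 1-2-3 but obtain exactly one occurrence of
1-2-3, which is an occurrence of 1-23, when `z` is appended. -/
def finalCount (n z : ℕ) : ℕ :=
  #{π : Perm (Fin n) | occ123 π = 0 ∧ occ12Below π z = 1 ∧ occ12EndBelow π z = 1}

lemma avoidCount_zero_right (n : ℕ) : avoidCount n 0 = avoidCount n 1 := by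
  simp [avoidCount, occ12Below_eq_zero_of_le_one]

lemma singleCount_zero_right (n : ℕ) : singleCount n 0 = singleCount n 1 := by
  simp [singleCount, occ12Below_eq_zero_of_le_one]

lemma avoidCount_succ_succ {u : ℕ} (hu : u ≤ n) :
    avoidCount (n + 1) (u + 1) = ∑ z ∈ Ico u (n + 1), avoidCount n z := by
  rw [← sum_ite_lt_add_ite_eq_zero _ hu, avoidCount, card_filter_perm_succ]
  congr! 1 with z
  simp_rw [snoc_avoids_iff]
  rw [card_filter_or_of_disjoint (by omega), card_filter_const_and, card_filter_const_and]
  rfl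

lemma finalCount_succ {z : ℕ} (hz : z ≤ n + 1) :
    finalCount (n + 1) z = if 2 ≤ z then avoidCount n (z - 1) else 0 := by
  rw [finalCount, card_filter_perm_succ]
  simp_rw [snoc_final_iff, card_filter_const_and]
  rw [Fin.sum_univ_eq_sum_range fun b ↦ if b = 1 then _ else _, sum_ite_eq']
  grind [avoidCount]

lemma sum_finalCount_succ (n : ℕ) :
    ∑ z ∈ range (n + 2), finalCount (n + 1) z = ∑ z ∈ Ico 1 (n + 1), avoidCount n z := by
  calc
    ∑ z ∈ range (n + 2), finalCount (n + 1) z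
      = ∑ z ∈ range (n + 2), if 2 ≤ z then avoidCount n (z - 1) else 0 :=
        sum_congr rfl fun z hz ↦ finalCount_succ (by grind)
    _ = ∑ z ∈ Ico (1 + 1) (n + 1 + 1), avoidCount n (z - 1) := by
        rw [← sum_filter]
        congr 1
        grind
    _ = ∑ z ∈ Ico 1 (n + 1), avoidCount n z := by
        rw [← sum_Ico_add']
        simp only [add_tsub_cancel_right]

lemma singleCount_succ_succ {u : ℕ} (hu : u ≤ n) :
    singleCount (n + 1) (u + 1) = ∑ z ∈ Ico u (n + 1), singleCount n z +
      if u = 0 then ∑ z ∈ range (n + 1), finalCount n z else 0 := by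
  have hfinal : (if u = 0 then ∑ z ∈ range (n + 1), finalCount n z else 0) =
      ∑ z : Fin (n + 1), if u = 0 then finalCount n z else 0 := by
    rw [← Fin.sum_univ_eq_sum_range]
    split_ifs <;> simp
  rw [hfinal, ← sum_ite_lt_add_ite_eq_zero _ hu, ← sum_add_distrib, singleCount,
    card_filter_perm_succ]
  congr! 1 with z
  simp_rw [snoc_single_iff]
  rw [card_filter_or_of_disjoint (by omega), card_filter_or_of_disjoint (by omega),
    card_filter_const_and, card_filter_const_and, card_filter_const_and]
  rfl

theorem avoidCount_eq_ballot {u : ℕ} (hu : u ≤ n) : (avoidCount n u : ℤ) = ballot n u := by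
  induction n generalizing u with
  | zero =>
    obtain rfl : u = 0 := by omega
    simp [avoidCount, occ12Below, occ123, ballot]
  | succ n ih =>
    have hsucc {v : ℕ} (hv : v ≤ n) :
        (avoidCount (n + 1) (v + 1) : ℤ) = ballot (n + 1) (v + 1) := by
      rw [avoidCount_succ_succ hv, Nat.cast_sum,
        ← sum_Ico_ballot (m := n + 1) (by omega) (by omega) (by omega)]
      exact sum_congr rfl fun z hz ↦ ih (by grind)
    cases u with
    | zero => rw [avoidCount_zero_right, hsucc n.zero_le, ballot_succ_zero]
    | succ v => exact hsucc (by omega)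

lemma sum_finalCount_eq_ballot (hn : 0 < n) :
    ∑ z ∈ range (n + 1), (finalCount n z : ℤ) = ballot n 2 := by
  obtain ⟨n, rfl⟩ := Nat.exists_eq_add_one.2 hn
  rw [← Nat.cast_sum, sum_finalCount_succ, Nat.cast_sum,
    ← sum_Ico_ballot (m := n + 1) (by omega) (by omega) (by omega)]
  exact sum_congr rfl fun z hz ↦ avoidCount_eq_ballot (by grind)

-- Thresholds `0` and `1` impose the same condition, whence the `max`.
theorem singleCount_eq_ballot {u : ℕ} (hu : u ≤ n) :
    (singleCount n u : ℤ) = ballot (n + 1) (max u 1 + 3) := by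
  induction n generalizing u with
  | zero =>
    obtain rfl : u = 0 := by omega
    simp [singleCount, occ123, ballot]
  | succ n ih =>
    suffices hsucc : ∀ v ≤ n, (singleCount (n + 1) (v + 1) : ℤ) = ballot (n + 2) (v + 4) by
      cases u with
      | zero => simpa [singleCount_zero_right] using hsucc 0 n.zero_le
      | succ v => simpa using hsucc v (by omega)
    intro v hv
    rw [singleCount_succ_succ hv]
    rcases n.eq_zero_or_pos with rfl | hn
    · obtain rfl : v = 0 := by omega
      simp [singleCount, finalCount, occ123, occ12Below, ballot]
    · push_cast
      rw [← sum_Ico_ballot_max_one_add_three hn hv, sum_finalCount_eq_ballot hn]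
      congr 1
      exact sum_congr rfl fun z hz ↦ ih (by grind)

lemma ncard_eq_singleCount (n : ℕ) :
    {π : Perm (Fin n) | occ1_23 π = 1 ∧ occ123 π = 1}.ncard = singleCount n 0 := by
  simp [singleCount, occ12Below_eq_zero_of_le_one, Set.ncard_eq_toFinset_card']

end PermPattern

open PermPattern

/-- The number of permutations of length `n ≥ 3` with exactly one occurrence of
the vincular pattern 1-23 and exactly one occurrence of the classical pattern
1-2-3 is `(5/(n+2)) * C(2n-2, n+1)`. -/
theorem single_1_23_count (n : ℕ) (hn : 3 ≤ n) :
    ({π : Equiv.Perm (Fin n) | occ1_23 π = 1 ∧ occ123 π = 1}.ncard : ℚ)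
      = (5 / (n + 2 : ℚ)) * (Nat.choose (2 * n - 2) (n + 1)) := by
  have hcount : (singleCount n 0 : ℤ) = ballot (n + 1) 4 := singleCount_eq_ballot n.zero_le
  have hballot : (n + 2) * ballot (n + 1) 4 = 5 * (2 * n - 2).choose (n + 1) := by
    have h := succ_mul_ballot (n := n + 1) (u := 4) (by omega)
    rw [show 2 * (n + 1) - 4 = 2 * n - 2 by omega] at h
    push_cast at h
    linear_combination h
  have hmul : (n + 2 : ℚ) * singleCount n 0 = 5 * (2 * n - 2).choose (n + 1) := by
    rw [← hcount] at hballot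
    exact_mod_cast hballot
  rw [ncard_eq_singleCount]
  field_simp
  linear_combination hmul
end

section
/- For n ≥ 3, the number of permutations of length n with exactly one occurrence of the classical pattern 1-2-3 equals (6/(n+3)) * C(2n-1, n+2). -/
/-!
Reversing the values turns 1-2-3 into 3-2-1. Following Burstein, let `(i, b, k)` be the only
occurrence of 3-2-1 in `π`. Every position left of `b` other than `i` carries a value below `π b`,
and every position right of `b` other than `k` a value above it, which forces `π b = b`. Change `π`
on `{x ≤ b}` to take the value `b` at `i` and `π k` at `b`, and on `{x ≥ b}` to take the value `b`
at `k` and `π i` at `b`: this splits `π` into 3-2-1-avoiding permutations of the two intervals,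
neither of which fixes `b`, and any two such permutations can be merged back. The two sides are
exchanged by order duality, under which the pattern 3-2-1 is invariant.

The number of 3-2-1-avoiders of length `n` is the Catalan number `C n`: tracking the position of the
largest value gives the recurrence of the ballot numbers. Those fixing an end point are counted by
`C (n - 1)`, so the answer is the convolution of the differences `C (j + 1) - C j` with themselves,
which evaluates to `C (n + 2) - 4 * C (n + 1) + 3 * C n`.
-/

open Equiv Function Set

theorem apply_mem_of_forall_notMem_fixed {α : Type*} {π : Perm α} {s : Set α} {x : α}
    (hπ : ∀ x ∉ s, π x = x) (hx : x ∈ s) : π x ∈ s := by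
  by_contra h
  exact h ((π.injective (hπ _ h)).symm ▸ hx)

theorem perm_ext_of_forall_ne {α : Type*} {σ τ : Perm α} (b : α) (h : ∀ x ≠ b, σ x = τ x) :
    σ = τ := by
  have eq_self {y : α} (hy : σ y = τ b) : y = b := by
    by_contra hyb
    exact hyb (τ.injective ((h y hyb).symm.trans hy))
  ext x
  by_cases hx : x = b
  · obtain ⟨y, hy⟩ := σ.surjective (τ b)
    rw [hx, ← hy, eq_self hy]
  · exact h x hx

theorem exists_perm_eqOn_of_mapsTo {α : Type*} {μ : Perm α} {s : Set α} [Finite s]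
    (h : MapsTo μ s s) : ∃ ρ : Perm α, EqOn ρ μ s ∧ ∀ x ∉ s, ρ x = x := by
  classical
  refine ⟨Perm.ofSubtype (μ.subtypePermOfFintype h), fun x hx ↦ ?_, fun x hx ↦ ?_⟩
  · exact Perm.ofSubtype_apply_of_mem _ hx
  · exact Perm.ofSubtype_apply_of_not_mem _ hx

theorem le_apply_of_forall_lt {α : Type*} [LinearOrder α] [Finite α] {π : Perm α} {b : α}
    (h : ∀ x < b, π x < π b) : b ≤ π b := by
  by_contra! hb
  have maps : MapsTo π (Iio b) (Iio b) := fun x hx ↦ (h x hx).trans hb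
  simpa using Perm.perm_symm_mapsTo_of_mapsTo π maps hb

section Occurrences

variable {α : Type*} [LinearOrder α] {π : Perm α} {s : Set α} {x y z : α}

/-- `(x, y, z)` is an occurrence of the classical pattern 3-2-1 in `π`. -/
def Is321 (π : Perm α) (x y z : α) : Prop :=
  x < y ∧ y < z ∧ π z < π y ∧ π y < π x

/-- `π` contains no occurrence of the classical pattern 3-2-1. -/
def Avoids321 (π : Perm α) : Prop :=
  ∀ x y z, ¬Is321 π x y z

/-- `(i, b, k)` is the only occurrence of the classical pattern 3-2-1 in `π`. -/
def IsUnique321 (π : Perm α) (i b k : α) : Prop :=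
  Is321 π i b k ∧ ∀ x y z, Is321 π x y z → x = i ∧ y = b ∧ z = k

-- `Perm αᵒᵈ` unfolds to `Perm α`, so passing `αᵒᵈ` explicitly reverses the order and leaves `π` as
-- it is.
theorem is321_dual : Is321 (α := αᵒᵈ) π z y x ↔ Is321 π x y z :=
  ⟨fun ⟨h₁, h₂, h₃, h₄⟩ ↦ ⟨h₂, h₁, h₄, h₃⟩, fun ⟨h₁, h₂, h₃, h₄⟩ ↦ ⟨h₂, h₁, h₄, h₃⟩⟩

theorem avoids321_dual : Avoids321 (α := αᵒᵈ) π ↔ Avoids321 π :=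
  ⟨fun h x y z ↦ mt is321_dual.2 (h z y x), fun h x y z ↦ mt is321_dual.1 (h z y x)⟩

theorem Is321.mem_of_ordConnected (hs : s.OrdConnected) (hπ : ∀ x ∉ s, π x = x)
    (h : Is321 π x y z) : x ∈ s ∧ y ∈ s ∧ z ∈ s := by
  obtain ⟨hxy, hyz, hzy, hyx⟩ := h
  have hy : y ∈ s := by
    by_contra hy
    rw [hπ y hy] at hyx
    by_cases hx : x ∈ s
    · exact hy (hs.out hx (apply_mem_of_forall_notMem_fixed hπ hx) ⟨hxy.le, hyx.le⟩)
    · exact (hπ x hx ▸ hyx).not_gt hxy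
  have hy' := apply_mem_of_forall_notMem_fixed hπ hy
  refine ⟨?_, hy, ?_⟩ <;> by_contra h
  · exact h (hs.out hy' hy ⟨(hπ x h ▸ hyx).le, hxy.le⟩)
  · exact h (hs.out hy hy' ⟨hyz.le, (hπ z h ▸ hzy).le⟩)

theorem avoids321_permCongr {β : Type*} [LinearOrder β] (e : α ≃o β) :
    Avoids321 (e.toEquiv.permCongr π) ↔ Avoids321 π := by
  simp [Avoids321, Is321, e.surjective.forall]

theorem avoids321_ofSubtype [DecidablePred (· ∈ s)] (hs : s.OrdConnected) (σ : Perm s) :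
    Avoids321 (Perm.ofSubtype σ) ↔ Avoids321 σ := by
  have coe_iff (x y z : s) : Is321 (Perm.ofSubtype σ) x y z ↔ Is321 σ x y z := by
    simp [Is321]
  refine ⟨fun h x y z hσ ↦ h x y z ((coe_iff x y z).2 hσ), fun h x y z hσ ↦ ?_⟩
  obtain ⟨hx, hy, hz⟩ :=
    hσ.mem_of_ordConnected hs fun _ ↦ Perm.ofSubtype_apply_of_not_mem σ
  exact h ⟨x, hx⟩ ⟨y, hy⟩ ⟨z, hz⟩ ((coe_iff _ _ _).1 hσ)

end Occurrences

section Gluing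

variable {α : Type*} [LinearOrder α] {b : α} {ρ τ ρ' τ' : Perm α} {x y z : α}

/-- The part of a permutation containing 3-2-1 once that lives on one side `s` of the middle entry
`b`: it acts on `s` and really involves `b`. -/
structure IsFactor (s : Set α) (b : α) (π : Perm α) : Prop where
  fix : ∀ x ∉ s, π x = x
  ne : π b ≠ b

/-- The permutation obtained by merging `ρ`, acting on `Set.Iic b`, with `τ`, acting on
`Set.Ici b`: the value `b` of `ρ` is replaced by `τ b`, the value `b` of `τ` by `ρ b`, and `b`
becomes a fixed point. -/
def glue (b : α) (ρ τ : Perm α) : Perm α :=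
  swap b (ρ b) * τ * ρ

namespace IsFactor

theorem apply_le (hρ : IsFactor (Iic b) b ρ) (hx : x ≤ b) : ρ x ≤ b :=
  apply_mem_of_forall_notMem_fixed hρ.fix hx

theorem apply_self_lt (hρ : IsFactor (Iic b) b ρ) : ρ b < b :=
  (hρ.apply_le le_rfl).lt_of_ne hρ.ne

theorem symm_apply_lt (hρ : IsFactor (Iic b) b ρ) : ρ.symm b < b := by
  by_contra! h
  obtain h | h := h.eq_or_lt
  · exact hρ.ne ((ρ.eq_symm_apply).1 h)
  · have := hρ.fix _ h.not_ge
    rw [apply_symm_apply] at this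
    exact h.ne this

end IsFactor

theorem glue_apply_of_gt (hρ : IsFactor (Iic b) b ρ) (hx : b < x) :
    glue b ρ τ x = swap b (ρ b) (τ x) := by
  simp [glue, hρ.fix x hx.not_ge]

variable (hρ : IsFactor (Iic b) b ρ) (hτ : IsFactor (Ici b) b τ)
include hρ hτ

theorem glue_apply_self : glue b ρ τ b = b := by
  simp [glue, hτ.fix _ hρ.apply_self_lt.not_ge]

theorem glue_apply_of_lt (hx : x < b) : glue b ρ τ x = swap b (τ b) (ρ x) := by
  have hτb : b < τ b := hτ.apply_self_lt (α := αᵒᵈ)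
  have hρb : ρ b < b := hρ.apply_self_lt
  obtain h | h := (hρ.apply_le hx.le).eq_or_lt
  · simp [glue, h, swap_apply_of_ne_of_ne hτb.ne' (hρb.trans hτb).ne']
  · simp [glue, hτ.fix _ h.not_ge, swap_apply_of_ne_of_ne h.ne (ρ.injective.ne hx.ne),
      swap_apply_of_ne_of_ne h.ne (h.trans hτb).ne]

theorem glue_comm : glue b τ ρ = glue b ρ τ := by
  ext x
  rcases lt_trichotomy x b with hx | rfl | hx
  · exact (glue_apply_of_gt (α := αᵒᵈ) hτ hx).trans (glue_apply_of_lt hρ hτ hx).symm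
  · exact (glue_apply_self (α := αᵒᵈ) hτ hρ).trans (glue_apply_self hρ hτ).symm
  · exact (glue_apply_of_lt (α := αᵒᵈ) hτ hρ hx).trans (glue_apply_of_gt hρ hx).symm

theorem glue_apply_symm_left : glue b ρ τ (ρ.symm b) = τ b := by
  simp [glue_apply_of_lt hρ hτ hρ.symm_apply_lt]

theorem glue_apply_symm_right : glue b ρ τ (τ.symm b) = ρ b := by
  rw [← glue_comm hρ hτ]
  exact glue_apply_symm_left (α := αᵒᵈ) hτ hρ

theorem min_glue_apply (hx : x < b) : min (glue b ρ τ x) b = ρ x := by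
  have hτb : b < τ b := hτ.apply_self_lt (α := αᵒᵈ)
  rw [glue_apply_of_lt hρ hτ hx]
  obtain h | h := (hρ.apply_le hx.le).eq_or_lt
  · simp [h, hτb.le]
  · rw [swap_apply_of_ne_of_ne h.ne (h.trans hτb).ne, min_eq_left h.le]

theorem max_glue_apply (hx : b < x) : max (glue b ρ τ x) b = τ x := by
  rw [← glue_comm hρ hτ]
  exact min_glue_apply (α := αᵒᵈ) hτ hρ hx

theorem glue_left_injective (hρ' : IsFactor (Iic b) b ρ') (hτ' : IsFactor (Ici b) b τ')
    (h : glue b ρ τ = glue b ρ' τ') : ρ = ρ' := by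
  refine perm_ext_of_forall_ne b fun x hx ↦ ?_
  obtain hx | hx := hx.lt_or_gt
  · rw [← min_glue_apply hρ hτ hx, h, min_glue_apply hρ' hτ' hx]
  · rw [hρ.fix x hx.not_ge, hρ'.fix x hx.not_ge]

theorem glue_right_injective (hρ' : IsFactor (Iic b) b ρ') (hτ' : IsFactor (Ici b) b τ')
    (h : glue b ρ τ = glue b ρ' τ') : τ = τ' := by
  rw [← glue_comm hρ hτ, ← glue_comm hρ' hτ'] at h
  exact glue_left_injective (α := αᵒᵈ) hτ hρ hτ' hρ' h

theorem is321_glue_iff : Is321 (glue b ρ τ) x b z ↔ x = ρ.symm b ∧ z = τ.symm b := by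
  constructor
  · rintro ⟨hx, hz, hzb, hbx⟩
    rw [glue_apply_self hρ hτ] at hzb hbx
    rw [eq_symm_apply, eq_symm_apply, ← min_glue_apply hρ hτ hx, ← max_glue_apply hρ hτ hz]
    exact ⟨min_eq_right hbx.le, max_eq_right hzb.le⟩
  · rintro ⟨rfl, rfl⟩
    refine ⟨hρ.symm_apply_lt, hτ.symm_apply_lt (α := αᵒᵈ), ?_, ?_⟩ <;>
      rw [glue_apply_self hρ hτ]
    · exact (glue_apply_symm_right hρ hτ).trans_lt hρ.apply_self_lt
    · rw [glue_apply_symm_left hρ hτ]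
      exact hτ.apply_self_lt (α := αᵒᵈ)

theorem avoids321_left_iff :
    Avoids321 ρ ↔ ∀ x y z, y < b → ¬Is321 (glue b ρ τ) x y z := by
  constructor
  · rintro h x y z hy ⟨hxy, hyz, hzy, hyx⟩
    have hρx := min_glue_apply hρ hτ (hxy.trans hy)
    have hρy := min_glue_apply hρ hτ hy
    have hρyx : ρ y < ρ x := by
      refine lt_of_le_of_ne ?_ (ρ.injective.ne hxy.ne')
      rw [← hρx, ← hρy]
      exact min_le_min_right b hyx.le
    have hyb : glue b ρ τ y = ρ y := by grind
    obtain hz | rfl | hz := lt_trichotomy z b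
    · have hρz := min_glue_apply hρ hτ hz
      exact h x y z ⟨hxy, hyz, by grind, hρyx⟩
    · rw [glue_apply_self hρ hτ] at hzy
      grind
    · have hτz : τ z = b := by
        rw [← max_glue_apply hρ hτ hz]
        grind
      rw [(eq_symm_apply τ).2 hτz, glue_apply_symm_right hρ hτ, hyb] at hzy
      exact h x y b ⟨hxy, hy, hzy, hρyx⟩
  · rintro h x y z hρxyz
    obtain ⟨-, -, hz⟩ := hρxyz.mem_of_ordConnected ordConnected_Iic hρ.fix
    obtain ⟨hxy, hyz, hzy, hyx⟩ := hρxyz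
    have hy : y < b := hyz.trans_le hz
    have hρx := min_glue_apply hρ hτ (hxy.trans hy)
    have hρy := min_glue_apply hρ hτ hy
    obtain rfl | hz := hz.eq_or_lt
    · refine h x y (τ.symm z) hy ⟨hxy, hyz.trans (hτ.symm_apply_lt (α := αᵒᵈ)), ?_, by grind⟩
      rw [glue_apply_symm_right hρ hτ]
      grind
    · have hρz := min_glue_apply hρ hτ hz
      exact h x y z hy ⟨hxy, hyz, by grind, by grind⟩

theorem avoids321_right_iff :
    Avoids321 τ ↔ ∀ x y z, b < y → ¬Is321 (glue b ρ τ) x y z := by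
  rw [← glue_comm hρ hτ, ← avoids321_dual]
  refine (avoids321_left_iff (α := αᵒᵈ) hτ hρ).trans ⟨fun h x y z hy ↦ ?_, fun h x y z hy ↦ ?_⟩
  · exact mt (is321_dual (α := α)).2 (h z y x hy)
  · exact mt (is321_dual (α := α)).1 (h z y x hy)

theorem exists_isUnique321_glue_iff :
    (∃ i k, IsUnique321 (glue b ρ τ) i b k) ↔ Avoids321 ρ ∧ Avoids321 τ := by
  rw [avoids321_left_iff hρ hτ, avoids321_right_iff hρ hτ]
  constructor
  · rintro ⟨i, k, -, eq_of_is321⟩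
    exact ⟨fun x y z hy h ↦ hy.ne (eq_of_is321 x y z h).2.1,
      fun x y z hy h ↦ hy.ne' (eq_of_is321 x y z h).2.1⟩
  · rintro ⟨left, right⟩
    refine ⟨ρ.symm b, τ.symm b, (is321_glue_iff hρ hτ).2 ⟨rfl, rfl⟩, fun x y z h ↦ ?_⟩
    obtain rfl : y = b :=
      le_antisymm (not_lt.1 fun hy ↦ right x y z hy h) (not_lt.1 fun hy ↦ left x y z hy h)
    obtain ⟨hx, hz⟩ := (is321_glue_iff hρ hτ).1 h
    exact ⟨hx, rfl, hz⟩

end Gluing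

namespace IsUnique321

variable {α : Type*} [LinearOrder α] {π : Perm α} {i b k x : α} (h : IsUnique321 π i b k)
include h

theorem dual : IsUnique321 (α := αᵒᵈ) π k b i := by
  refine ⟨is321_dual.2 h.1, fun x y z hxyz ↦ ?_⟩
  obtain ⟨hz, hy, hx⟩ := h.2 z y x (is321_dual.1 hxyz)
  exact ⟨hx, hy, hz⟩

theorem apply_lt (hx : x < b) (hxi : x ≠ i) : π x < π b := by
  obtain ⟨-, hbk, hkb, -⟩ := h.1
  refine (π.injective.ne hx.ne).lt_of_le (not_lt.1 fun hbx ↦ hxi ?_)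
  exact (h.2 x b k ⟨hx, hbk, hkb, hbx⟩).1

theorem le_apply_self [Finite α] : b ≤ π b := by
  obtain ⟨hib, hbk, hkb, -⟩ := h.1
  -- With the values at `i` and `k` exchanged, all values left of `b` are below the one at `b`.
  have swap_b : swap i k b = b := swap_apply_of_ne_of_ne hib.ne' hbk.ne
  suffices b ≤ (π * swap i k) b by simpa [swap_b] using this
  refine le_apply_of_forall_lt fun x hx ↦ ?_
  obtain rfl | hxi := eq_or_ne x i
  · simpa [swap_b] using hkb
  · simpa [swap_b, swap_apply_of_ne_of_ne hxi (hx.trans hbk).ne] using h.apply_lt hx hxi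

theorem apply_self [Finite α] : π b = b :=
  le_antisymm h.dual.le_apply_self h.le_apply_self

theorem exists_left_factor [Finite α] :
    ∃ ρ, IsFactor (Iic b) b ρ ∧ ρ i = b ∧ ρ b = π k ∧ ∀ x < b, x ≠ i → ρ x = π x := by
  obtain ⟨hib, hbk, hkb, hbi⟩ := h.1
  have π_lt {x : α} (hx : x < b) (hxi : x ≠ i) : π x < b :=
    (h.apply_lt hx hxi).trans_eq h.apply_self
  rw [h.apply_self] at hkb hbi
  obtain ⟨μ, μ_i, μ_b, μ_eq⟩ : ∃ μ : Perm α, μ i = b ∧ μ b = π k ∧ ∀ x < b, x ≠ i → μ x = π x := by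
    refine ⟨swap b (π i) * π * swap b k, ?_, ?_, fun x hx hxi ↦ ?_⟩
    · simp [swap_apply_of_ne_of_ne hib.ne (hib.trans hbk).ne]
    · simp [swap_apply_of_ne_of_ne hkb.ne (hkb.trans hbi).ne]
    · have hπx := π_lt hx hxi
      simp [swap_apply_of_ne_of_ne hx.ne (hx.trans hbk).ne,
        swap_apply_of_ne_of_ne hπx.ne (hπx.trans hbi).ne]
  have maps : MapsTo μ (Iic b) (Iic b) := by
    intro x hx
    obtain rfl | hx := (mem_Iic.1 hx).eq_or_lt
    · exact μ_b.trans_le hkb.le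
    obtain rfl | hxi := eq_or_ne x i
    · exact μ_i.le
    · exact (μ_eq x hx hxi).trans_le (π_lt hx hxi).le
  obtain ⟨ρ, ρ_eq, ρ_fix⟩ := exists_perm_eqOn_of_mapsTo maps
  have ρ_b : ρ b = π k := (ρ_eq self_mem_Iic).trans μ_b
  exact ⟨ρ, ⟨ρ_fix, ρ_b.trans_ne hkb.ne⟩, (ρ_eq hib.le).trans μ_i, ρ_b,
    fun x hx hxi ↦ (ρ_eq hx.le).trans (μ_eq x hx hxi)⟩

theorem exists_glue_eq [Finite α] :
    ∃ ρ τ, IsFactor (Iic b) b ρ ∧ IsFactor (Ici b) b τ ∧ glue b ρ τ = π := by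
  obtain ⟨ρ, hρ, ρ_i, ρ_b, ρ_eq⟩ := h.exists_left_factor
  obtain ⟨hib, hbk, hkb, hbi⟩ := h.1
  rw [h.apply_self] at hkb hbi
  refine ⟨ρ, swap b (ρ b) * π * ρ⁻¹, hρ, ⟨fun x hx ↦ ?_, ?_⟩, by simp [glue, mul_assoc]⟩
  · obtain ⟨w, rfl⟩ := ρ.surjective x
    have hρw : ρ w < b := not_le.1 hx
    have hwb : w ≤ b := by
      by_contra hw
      exact hw ((hρ.fix w hw).symm.trans_le hρw.le)
    suffices swap b (ρ b) (π w) = ρ w by simpa using this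
    obtain rfl | hwb := hwb.eq_or_lt
    · rw [h.apply_self, swap_apply_left]
    · have hwi : w ≠ i := by
        rintro rfl
        exact hρw.ne ρ_i
      rw [← ρ_eq w hwb hwi, swap_apply_of_ne_of_ne hρw.ne (ρ.injective.ne hwb.ne)]
  · rw [Perm.mul_apply, Perm.mul_apply, Perm.inv_def, (symm_apply_eq ρ).2 ρ_i.symm, ρ_b,
      swap_apply_of_ne_of_ne hbi.ne' (hkb.trans hbi).ne']
    exact hbi.ne'

end IsUnique321

section CatalanCount

variable {n m : ℕ} {p : Fin (n + 1)} {σ : Perm (Fin n)}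

/-- `σ` avoids 3-2-1 and its values increase on the positions `m, m + 1, …`. The numbers of such
permutations are the ballot numbers. -/
def IsBallot (m : ℕ) (σ : Perm (Fin n)) : Prop :=
  Avoids321 σ ∧ StrictMonoOn σ {x | m ≤ (x : ℕ)}

/-- The permutation of `Fin (n + 1)` obtained from `σ` by inserting a new largest value at the
position `p`. -/
def insertMax (p : Fin (n + 1)) (σ : Perm (Fin n)) : Perm (Fin (n + 1)) :=
  (finSuccEquiv' p).trans (σ.optionCongr.trans (finSuccEquiv' (Fin.last n)).symm)

@[simp]
theorem insertMax_apply_self : insertMax p σ p = Fin.last n := by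
  simp [insertMax]

@[simp]
theorem insertMax_apply_succAbove (x : Fin n) :
    insertMax p σ (p.succAbove x) = (σ x).castSucc := by
  simp [insertMax]

theorem insertMax_bijective (n : ℕ) :
    Bijective fun q : Fin (n + 1) × Perm (Fin n) ↦ insertMax q.1 q.2 := by
  rw [Fintype.bijective_iff_injective_and_card]
  refine ⟨fun ⟨p, σ⟩ ⟨q, τ⟩ h ↦ ?_, by simp [Fintype.card_perm, Nat.factorial_succ]⟩
  replace h : insertMax p σ = insertMax q τ := h
  obtain rfl : p = q := by
    rw [← (insertMax p σ).injective.eq_iff, insertMax_apply_self, h, insertMax_apply_self]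
  congr 1
  ext x
  simpa [Fin.ext_iff] using congr($h (p.succAbove x))

theorem avoids321_insertMax_iff : Avoids321 (insertMax p σ) ↔ IsBallot p σ := by
  refine ⟨fun h ↦ ⟨fun x y z ⟨hxy, hyz, hzy, hyx⟩ ↦ ?_, fun x hx y _ hxy ↦ ?_⟩, ?_⟩
  · refine h (p.succAbove x) (p.succAbove y) (p.succAbove z) ⟨?_, ?_, ?_, ?_⟩ <;> simpa
  · by_contra hσ
    have hyx : σ y < σ x := (not_lt.1 hσ).lt_of_ne (σ.injective.ne hxy.ne')
    refine h p (p.succAbove x) (p.succAbove y) ⟨?_, ?_, ?_, ?_⟩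
    · exact (Fin.lt_succAbove_iff_le_castSucc p x).2 hx
    · simpa
    · simpa
    · simp [Fin.castSucc_lt_last]
  · rintro ⟨havoid, hmono⟩ x y z ⟨hxy, hyz, hzy, hyx⟩
    obtain rfl | ⟨y, rfl⟩ := Fin.eq_self_or_eq_succAbove p y
    · simp [(Fin.le_last _).not_gt] at hyx
    obtain rfl | ⟨z, rfl⟩ := Fin.eq_self_or_eq_succAbove p z
    · simp [(Fin.le_last _).not_gt] at hzy
    rw [Fin.succAbove_lt_succAbove_iff] at hyz
    rw [insertMax_apply_succAbove, insertMax_apply_succAbove, Fin.castSucc_lt_castSucc_iff] at hzy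
    obtain rfl | ⟨x, rfl⟩ := Fin.eq_self_or_eq_succAbove p x
    · have hy : (x : ℕ) ≤ y := (Fin.lt_succAbove_iff_le_castSucc x y).1 hxy
      exact hzy.not_gt (hmono hy (hy.trans hyz.le) hyz)
    · exact havoid x y z ⟨by simpa using hxy, hyz, hzy, by simpa using hyx⟩

theorem isBallot_iff_avoids321 (hm : n ≤ m + 1) : IsBallot m σ ↔ Avoids321 σ := by
  have tail_subsingleton : {x : Fin n | m ≤ (x : ℕ)}.Subsingleton := by
    intro x hx y hy
    simp only [mem_ofPred_eq] at hx hy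
    lia
  exact and_iff_left (tail_subsingleton.strictMonoOn σ)

theorem isBallot_insertMax_last_iff :
    IsBallot m (insertMax (Fin.last n) σ) ↔ IsBallot m σ := by
  have hlast (x : Fin n) : insertMax (Fin.last n) σ x.castSucc = (σ x).castSucc := by
    simpa using insertMax_apply_succAbove (p := Fin.last n) (σ := σ) x
  constructor
  · rintro ⟨havoid, hmono⟩
    refine ⟨(avoids321_insertMax_iff.1 havoid).1, fun x hx y hy hxy ↦ ?_⟩
    simpa [hlast] using hmono (a := x.castSucc) hx (b := y.castSucc) hy hxy
  · rintro ⟨havoid, hmono⟩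
    refine ⟨avoids321_insertMax_iff.2 ((isBallot_iff_avoids321 n.le_succ).2 havoid),
      fun x hx y hy hxy ↦ ?_⟩
    obtain ⟨x, rfl⟩ := Fin.exists_castSucc_eq.2 (hxy.trans_le y.le_last).ne
    rw [hlast]
    induction y using Fin.lastCases with
    | last => simp [Fin.castSucc_lt_last]
    | cast y => simpa [hlast] using hmono hx hy hxy

theorem isBallot_insertMax_castSucc_iff {p : Fin n} :
    IsBallot m (insertMax p.castSucc σ) ↔ (p : ℕ) < m ∧ IsBallot p σ := by
  rw [IsBallot, avoids321_insertMax_iff, Fin.val_castSucc, and_comm]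
  refine and_congr_left fun ⟨_, hmono⟩ ↦ ⟨fun h ↦ ?_, fun hpm ↦ ?_⟩
  · by_contra! hmp
    have := h (a := p.castSucc) hmp (b := Fin.last n) (hmp.trans p.is_lt.le) p.castSucc_lt_last
    simp [(Fin.le_last _).not_gt] at this
  · have shift (x : Fin (n + 1)) (hx : m ≤ (x : ℕ)) :
        ∃ y : Fin n, (p : ℕ) ≤ y ∧ p.castSucc.succAbove y = x := by
      have hx₀ : p.castSucc < x := hpm.trans_le hx
      obtain rfl | ⟨y, rfl⟩ := Fin.eq_self_or_eq_succAbove p.castSucc x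
      · exact absurd hx₀ (lt_irrefl _)
      · exact ⟨y, (Fin.lt_succAbove_iff_le_castSucc _ _).1 hx₀, rfl⟩
    intro x hx y hy hxy
    obtain ⟨x, hpx, rfl⟩ := shift x hx
    obtain ⟨y, hpy, rfl⟩ := shift y hy
    simpa using hmono hpx hpy (by simpa using hxy)

theorem card_isBallot_succ (hm : m ≤ n) :
    Nat.card {σ : Perm (Fin (n + 1)) // IsBallot m σ} =
      ∑ p ∈ Finset.range m, Nat.card {σ : Perm (Fin n) // IsBallot p σ} +
        Nat.card {σ : Perm (Fin n) // IsBallot m σ} := by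
  let e : Fin (n + 1) × Perm (Fin n) ≃ Perm (Fin (n + 1)) := .ofBijective _ (insertMax_bijective n)
  have card_eq : Nat.card {σ : Perm (Fin (n + 1)) // IsBallot m σ} =
      ∑ p, Nat.card {σ : Perm (Fin n) // IsBallot m (insertMax p σ)} := by
    rw [← Nat.card_sigma]
    exact Nat.card_congr ((e.subtypeEquiv fun q ↦ Iff.rfl).symm.trans
      (Equiv.subtypeProdEquivSigmaSubtype fun p σ ↦ IsBallot m (insertMax p σ)))
  rw [card_eq, Fin.sum_univ_castSucc]
  congr 1
  · simp_rw [isBallot_insertMax_castSucc_iff]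
    have card_ite (p : ℕ) : Nat.card {σ : Perm (Fin n) // p < m ∧ IsBallot p σ} =
        if p < m then Nat.card {σ : Perm (Fin n) // IsBallot p σ} else 0 := by
      split_ifs with h <;> simp [h]
    simp_rw [card_ite]
    rw [Fin.sum_univ_eq_sum_range
      (fun p ↦ if p < m then Nat.card {σ : Perm (Fin n) // IsBallot p σ} else 0),
      ← Finset.sum_filter]
    refine Finset.sum_congr ?_ fun _ _ ↦ rfl
    ext p
    simpa using fun hp ↦ hp.trans_le hm
  · simp_rw [isBallot_insertMax_last_iff]

theorem isBallot_zero_iff : IsBallot 0 σ ↔ σ = 1 := by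
  constructor
  · rintro ⟨-, hmono⟩
    have hσ : StrictMono σ := fun x y hxy ↦ hmono x.val.zero_le y.val.zero_le hxy
    let e : Fin n ≃o Fin n := ⟨σ, hσ.le_iff_le⟩
    have he : e = OrderIso.refl _ := Subsingleton.elim _ _
    exact Equiv.ext fun x ↦ congr($he x)
  · rintro rfl
    exact ⟨fun x y z ⟨_, hyz, hzy, _⟩ ↦ hyz.not_gt hzy, fun x _ y _ hxy ↦ hxy⟩

theorem ballot_add_choose {f : ℕ → ℕ → ℕ} (zero : ∀ n, f n 0 = 1)
    (step : ∀ n m, m < n → f (n + 1) (m + 1) = f (n + 1) m + f n (m + 1))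
    (diag : ∀ n, f (n + 1) (n + 1) = f (n + 1) n) :
    ∀ n m, m ≤ n → f n m + (n + m).choose (n + 1) = (n + m).choose n
  | n, 0, _ => by simp [zero]
  | n + 1, m + 1, hm => by
    have left := ballot_add_choose zero step diag (n + 1) m (by lia)
    have pascal₁ := Nat.choose_succ_succ (n + 1 + m) n
    have pascal₂ := Nat.choose_succ_succ (n + 1 + m) (n + 1)
    simp only [← add_assoc, Nat.succ_eq_add_one] at pascal₁ pascal₂ ⊢
    obtain rfl | hmn := (Nat.le_of_succ_le_succ hm).eq_or_lt
    · have symm : (m + 1 + m).choose (m + 1) = (m + 1 + m).choose m := by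
        rw [add_right_comm, ← two_mul, Nat.choose_symm_half]
      have := diag m
      lia
    · have below := ballot_add_choose zero step diag n (m + 1) hmn
      rw [← add_assoc, add_right_comm] at below
      have := step n m hmn
      lia

theorem ballot_self_eq_catalan {f : ℕ → ℕ → ℕ} (zero : ∀ n, f n 0 = 1)
    (step : ∀ n m, m < n → f (n + 1) (m + 1) = f (n + 1) m + f n (m + 1))
    (diag : ∀ n, f (n + 1) (n + 1) = f (n + 1) n) (n : ℕ) : f n n = catalan n := by
  have ballot := ballot_add_choose zero step diag n n le_rfl
  have ratio := Nat.choose_succ_right_eq (n + n) n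
  have hcat := succ_mul_catalan_eq_centralBinom n
  rw [Nat.add_sub_cancel] at ratio
  rw [Nat.centralBinom, two_mul] at hcat
  apply Nat.eq_of_mul_eq_mul_left n.succ_pos
  rw [Nat.succ_eq_add_one, hcat]
  linear_combination (n + 1) * ballot - ratio

theorem card_isBallot_self (n : ℕ) :
    Nat.card {σ : Perm (Fin n) // IsBallot n σ} = catalan n := by
  refine ballot_self_eq_catalan (f := fun n m ↦ Nat.card {σ : Perm (Fin n) // IsBallot m σ})
    (fun n ↦ ?_) (fun n m hmn ↦ ?_) (fun n ↦ ?_) n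
  · simp [isBallot_zero_iff]
  · rw [card_isBallot_succ (Nat.succ_le_of_lt hmn), card_isBallot_succ hmn.le,
      Finset.sum_range_succ]
  · simp_rw [isBallot_iff_avoids321 (Nat.le_succ (n + 1)), isBallot_iff_avoids321 le_rfl]

theorem card_avoids321 {α : Type*} [LinearOrder α] [Finite α] :
    Nat.card {π : Perm α // Avoids321 π} = catalan (Nat.card α) := by
  have := Fintype.ofFinite α
  let e : α ≃o Fin (Nat.card α) := (Fintype.orderIsoFinOfCardEq α (by simp)).symm
  rw [← card_isBallot_self]
  refine Nat.card_congr (e.toEquiv.permCongr.subtypeEquiv fun π ↦ ?_)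
  rw [isBallot_iff_avoids321 (Nat.le_succ _), avoids321_permCongr]

end CatalanCount

section FactorCount

variable {α : Type*} [LinearOrder α] {s : Set α} {b : α}

theorem card_avoids321_fixing [Finite s] (hs : s.OrdConnected) :
    Nat.card {π : Perm α // Avoids321 π ∧ ∀ x ∉ s, π x = x} = catalan s.ncard := by
  classical
  rw [← Nat.card_coe_set_eq, ← card_avoids321]
  let e := Perm.subtypeEquivSubtypePerm (· ∈ s)
  have he (σ : Perm s) : Avoids321 σ ↔ Avoids321 (e σ : Perm α) :=
    (avoids321_ofSubtype hs σ).symm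
  refine Nat.card_congr (((e.subtypeEquiv he).trans
    (Equiv.subtypeSubtypeEquivSubtypeInter _ Avoids321)).trans (Equiv.subtypeEquivRight ?_)).symm
  exact fun π ↦ and_comm

theorem card_isFactor_add_catalan [Finite α] (hs : s.OrdConnected) (hs' : (s \ {b}).OrdConnected) :
    Nat.card {ρ : Perm α // Avoids321 ρ ∧ IsFactor s b ρ} + catalan (s \ {b}).ncard =
      catalan s.ncard := by
  rw [← card_avoids321_fixing hs, ← card_avoids321_fixing hs']
  have fixing_subset : {π : Perm α | Avoids321 π ∧ ∀ x ∉ s \ {b}, π x = x} ⊆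
      {π | Avoids321 π ∧ ∀ x ∉ s, π x = x} :=
    fun π ⟨havoid, hfix⟩ ↦ ⟨havoid, fun x hx ↦ hfix x fun h ↦ hx h.1⟩
  have factor_eq : {π : Perm α | Avoids321 π ∧ IsFactor s b π} =
      {π | Avoids321 π ∧ ∀ x ∉ s, π x = x} \ {π | Avoids321 π ∧ ∀ x ∉ s \ {b}, π x = x} := by
    ext π
    refine ⟨fun ⟨havoid, hπ⟩ ↦ ⟨⟨havoid, hπ.fix⟩, fun h ↦ hπ.ne (h.2 b (by simp))⟩,
      fun ⟨⟨havoid, hfix⟩, hne⟩ ↦ ⟨havoid, hfix, fun hb ↦ hne ⟨havoid, fun x hx ↦ ?_⟩⟩⟩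
    obtain rfl | hxb := eq_or_ne x b
    · exact hb
    · exact hfix x fun hxs ↦ hx ⟨hxs, hxb⟩
  have := Set.ncard_sdiff_add_ncard_of_subset fixing_subset
  rwa [← factor_eq] at this

theorem card_isFactor_Iic_add_catalan {n : ℕ} (b : Fin n) :
    Nat.card {ρ // Avoids321 ρ ∧ IsFactor (Iic b) b ρ} + catalan b = catalan (b + 1) := by
  have hIio : Iic b \ {b} = Iio b := Iic_sdiff_right
  have := card_isFactor_add_catalan (s := Iic b) (b := b) ordConnected_Iic (hIio ▸ ordConnected_Iio)
  simpa [hIio, Set.ncard_eq_toFinset_card'] using this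

theorem card_isFactor_Ici_add_catalan {n : ℕ} (b : Fin n) :
    Nat.card {τ // Avoids321 τ ∧ IsFactor (Ici b) b τ} + catalan (n - 1 - b) =
      catalan (n - b) := by
  have hIoi : Ici b \ {b} = Ioi b := Ici_sdiff_left
  have := card_isFactor_add_catalan (s := Ici b) (b := b) ordConnected_Ici (hIoi ▸ ordConnected_Ioi)
  simpa [hIoi, Set.ncard_eq_toFinset_card'] using this

theorem card_exists_isUnique321 {α : Type*} [LinearOrder α] [Fintype α] :
    Nat.card {π : Perm α // ∃ i b k, IsUnique321 π i b k} =
      ∑ b : α, Nat.card {ρ // Avoids321 ρ ∧ IsFactor (Iic b) b ρ} *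
        Nat.card {τ // Avoids321 τ ∧ IsFactor (Ici b) b τ} := by
  simp_rw [← Nat.card_prod]
  rw [← Nat.card_sigma]
  let merge (q : Σ b : α, {ρ // Avoids321 ρ ∧ IsFactor (Iic b) b ρ} ×
      {τ // Avoids321 τ ∧ IsFactor (Ici b) b τ}) : Perm α := glue q.1 q.2.1 q.2.2
  have merge_unique q : ∃ i k, IsUnique321 (merge q) i q.1 k := by
    obtain ⟨b, ⟨ρ, hρ₃, hρ⟩, ⟨τ, hτ₃, hτ⟩⟩ := q
    exact (exists_isUnique321_glue_iff hρ hτ).2 ⟨hρ₃, hτ₃⟩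
  refine (Nat.card_eq_of_bijective (fun q ↦ ⟨merge q, ?merge_mem⟩) ⟨?_, ?_⟩).symm
  case merge_mem =>
    obtain ⟨i, k, h⟩ := merge_unique q
    exact ⟨i, q.1, k, h⟩
  · intro q q' h
    obtain ⟨i, k, hq⟩ := merge_unique q
    obtain ⟨i', k', hq'⟩ := merge_unique q'
    have merge_eq : merge q = merge q' := congr_arg Subtype.val h
    have fst_eq : q.1 = q'.1 := (hq'.2 _ _ _ (merge_eq ▸ hq.1)).2.1
    obtain ⟨b, ⟨ρ, hρ₃, hρ⟩, ⟨τ, hτ₃, hτ⟩⟩ := q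
    obtain ⟨b', ⟨ρ', hρ₃', hρ'⟩, ⟨τ', hτ₃', hτ'⟩⟩ := q'
    obtain rfl : b = b' := fst_eq
    obtain rfl := glue_left_injective hρ hτ hρ' hτ' merge_eq
    obtain rfl := glue_right_injective hρ hτ hρ' hτ' merge_eq
    rfl
  · rintro ⟨_, i, b, k, h⟩
    obtain ⟨ρ, τ, hρ, hτ, rfl⟩ := h.exists_glue_eq
    obtain ⟨hρ₃, hτ₃⟩ := (exists_isUnique321_glue_iff hρ hτ).1 ⟨i, k, h⟩
    exact ⟨⟨b, ⟨ρ, hρ₃, hρ⟩, ⟨τ, hτ₃, hτ⟩⟩, rfl⟩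

end FactorCount

section Catalan

open Finset.HasAntidiagonal (antidiagonal)

theorem sum_antidiagonal_catalan_diff_mul (n : ℕ) :
    ∑ p ∈ antidiagonal n, ((catalan (p.1 + 1) : ℤ) - catalan p.1) *
      (catalan (p.2 + 1) - catalan p.2) =
      catalan (n + 3) - 4 * catalan (n + 2) + 3 * catalan (n + 1) := by
  have conv (n : ℕ) : ∑ p ∈ antidiagonal n, (catalan p.1 : ℤ) * catalan p.2 =
      catalan (n + 1) := by
    exact_mod_cast (catalan_succ' n).symm
  have conv_left : ∑ p ∈ antidiagonal n, (catalan (p.1 + 1) : ℤ) * catalan p.2 =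
      catalan (n + 2) - catalan (n + 1) := by
    have := conv (n + 1)
    simp only [Finset.Nat.sum_antidiagonal_succ, catalan_zero, Nat.cast_one, one_mul] at this
    linarith
  have conv_right : ∑ p ∈ antidiagonal n, (catalan p.1 : ℤ) * catalan (p.2 + 1) =
      catalan (n + 2) - catalan (n + 1) := by
    have := conv (n + 1)
    simp only [Finset.Nat.sum_antidiagonal_succ', catalan_zero, Nat.cast_one, mul_one] at this
    linarith
  have conv_both : ∑ p ∈ antidiagonal n, (catalan (p.1 + 1) : ℤ) * catalan (p.2 + 1) =
      catalan (n + 3) - 2 * catalan (n + 2) := by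
    have := conv (n + 2)
    rw [Finset.Nat.sum_antidiagonal_succ, Finset.Nat.sum_antidiagonal_succ'] at this
    simp only [catalan_zero, Nat.cast_one, one_mul, mul_one] at this
    linarith
  simp only [sub_mul, mul_sub, Finset.sum_sub_distrib, conv, conv_left, conv_right, conv_both]
  ring

theorem catalan_eq_factorial_div (n : ℕ) :
    (catalan n : ℚ) = (2 * n).factorial / (n.factorial * (n + 1).factorial) := by
  have hcat : ((n + 1) * catalan n : ℚ) = n.centralBinom := by
    exact_mod_cast succ_mul_catalan_eq_centralBinom n
  rw [Nat.centralBinom, two_mul, Nat.cast_add_choose, ← two_mul] at hcat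
  rw [Nat.factorial_succ]
  push_cast
  field_simp at hcat ⊢
  linear_combination hcat

theorem catalan_sub_add_eq_choose (n : ℕ) :
    (catalan (n + 5) - 4 * catalan (n + 4) + 3 * catalan (n + 3) : ℚ) =
      6 / (n + 6) * (2 * n + 5).choose (n + 5) := by
  have choose_eq : ((2 * n + 5).choose (n + 5) : ℚ) =
      (2 * n + 5).factorial / ((n + 5).factorial * n.factorial) := by
    rw [show 2 * n + 5 = n + 5 + n by ring, Nat.cast_add_choose]
  rw [choose_eq]
  simp only [catalan_eq_factorial_div, mul_add, add_assoc, Nat.reduceMul, Nat.reduceAdd,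
    Nat.factorial_succ]
  push_cast
  field_simp
  ring

end Catalan

theorem card_exists_isUnique321_fin (n : ℕ) :
    (Nat.card {π : Perm (Fin (n + 1)) // ∃ i b k, IsUnique321 π i b k} : ℤ) =
      catalan (n + 3) - 4 * catalan (n + 2) + 3 * catalan (n + 1) := by
  rw [card_exists_isUnique321, ← sum_antidiagonal_catalan_diff_mul,
    Finset.Nat.sum_antidiagonal_eq_sum_range_succ (fun i j ↦ ((catalan (i + 1) : ℤ) - catalan i) *
      (catalan (j + 1) - catalan j)), Finset.sum_range, Nat.cast_sum]
  refine Finset.sum_congr rfl fun b _ ↦ ?_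
  have left := card_isFactor_Iic_add_catalan b
  have right := card_isFactor_Ici_add_catalan b
  rw [Nat.add_sub_cancel, Nat.sub_add_comm b.is_le] at right
  rw [← left, ← right]
  push_cast
  ring

theorem occ123_eq_one_iff {n : ℕ} (π : Perm (Fin n)) :
    occ123 π = 1 ↔ ∃ i b k, IsUnique321 (Fin.revPerm * π) i b k := by
  have mem_iff (x y z : Fin n) : (x < y ∧ y < z ∧ π x < π y ∧ π y < π z) ↔
      Is321 (Fin.revPerm * π) x y z := by
    simp [Is321, and_comm]
  simp only [occ123, Finset.card_eq_one, Finset.ext_iff, Prod.exists, Prod.forall,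
    Finset.mem_filter_univ, Finset.mem_singleton, Prod.mk.injEq, mem_iff, IsUnique321]
  refine exists₃_congr fun i b k ↦ ⟨fun h ↦ ⟨(h i b k).2 ⟨rfl, rfl, rfl⟩, fun x y z ↦ (h x y z).1⟩,
    fun ⟨h, unique⟩ x y z ↦ ⟨unique x y z, ?_⟩⟩
  rintro ⟨rfl, rfl, rfl⟩
  exact h

/-- The number of permutations of length `n ≥ 3` with exactly one occurrence of
the classical pattern 1-2-3 is `(6/(n+3)) * C(2n-1, n+2)`. -/
theorem single_123_count (n : ℕ) (hn : 3 ≤ n) :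
    ({π : Equiv.Perm (Fin n) | occ123 π = 1}.ncard : ℚ)
      = (6 / (n + 3 : ℚ)) * (Nat.choose (2 * n - 1) (n + 2)) := by
  obtain ⟨m, rfl⟩ : ∃ m, n = m + 3 := ⟨n - 3, by lia⟩
  have reversal : {π : Perm (Fin (m + 3)) | occ123 π = 1}.ncard =
      Nat.card {π : Perm (Fin (m + 3)) // ∃ i b k, IsUnique321 π i b k} :=
    Nat.card_congr ((Equiv.mulLeft Fin.revPerm).subtypeEquiv occ123_eq_one_iff)
  have count : ({π : Perm (Fin (m + 3)) | occ123 π = 1}.ncard : ℚ) =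
      catalan (m + 5) - 4 * catalan (m + 4) + 3 * catalan (m + 3) := by
    rw [reversal]
    exact_mod_cast card_exists_isUnique321_fin (m + 2)
  rw [count, catalan_sub_add_eq_choose]
  push_cast
  rw [add_assoc, show 2 * (m + 3) - 1 = 2 * m + 5 by lia]
  norm_num
end

section
/- For n ≥ 4, the number of permutations of length n with exactly one occurrence of the classical pattern 1-2-3 and no occurrence of the vincular pattern 1-23 equals (7/(n+3)) * C(2n-2, n+2). -/
/-!
Build permutations by repeatedly prepending a first entry, recording only the number `u` of entries
that exceed it. The new entry starts one occurrence of 1-2-3 for each noninversion, and one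
occurrence of 1-23 for each ascent, among the `u` largest entries. Hence `u` is harmless as long as
the `u` largest entries decrease, say for `u ≤ s`, and the entry creating the unique occurrence is
prepended at a *critical* site, where there is one noninversion and no ascent. Harmless choices
turn `s` into `s + 1` (for `u = 0`) or `u` (for `0 < u ≤ s`), which is the Catalan generating tree.
Critical sites are created only by prepending a second largest entry in front of a permutation that
does not start with its maximum, and then there are `s` of them. The resulting recurrence for
the number of completions is solved by ballot numbers.
-/

open Finset Equiv

namespace Single123

section BallotNumbers

/-- The number of descendants at depth `m` of a node labelled `s` in the Catalan generating tree, in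
which a node labelled `s` has children labelled `1, …, s + 1`. -/
def ballot : ℕ → ℕ → ℕ
  | 0, _ => 1
  | m + 1, s => ∑ i ∈ range (s + 1), ballot m (i + 1)

lemma ballot_succ_zero (m : ℕ) : ballot (m + 1) 0 = ballot m 1 := by
  simp [ballot]

lemma ballot_succ_succ (m s : ℕ) :
    ballot (m + 1) (s + 1) = ballot (m + 1) s + ballot m (s + 2) :=
  sum_range_succ _ _

lemma ballot_succ_add_choose (m s : ℕ) :
    ballot (m + 1) s + (2 * m + s + 2).choose m = (2 * m + s + 2).choose (m + 1) := by
  induction m generalizing s with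
  | zero => simp [ballot]
  | succ m ihm =>
    induction s with
    | zero =>
      have half := Nat.choose_symm_half (m + 1)
      have ih := ihm 1
      have pascal := Nat.choose_succ_succ' (2 * m + 3) m
      have pascal' := Nat.choose_succ_succ' (2 * m + 3) (m + 1)
      rw [ballot_succ_zero]
      grind
    | succ s ihs =>
      have ih := ihm (s + 2)
      have pascal := Nat.choose_succ_succ' (2 * m + s + 4) m
      have pascal' := Nat.choose_succ_succ' (2 * m + s + 4) (m + 1)
      rw [ballot_succ_succ]
      grind

lemma ballot_mul (m s : ℕ) :
    ballot m s * (m + s + 1) = (s + 1) * (2 * m + s).choose m := by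
  cases m with
  | zero => simp [ballot]
  | succ m =>
    have difference := ballot_succ_add_choose m s
    have ratio := Nat.choose_succ_right_eq (2 * m + s + 2) m
    rw [show 2 * m + s + 2 - m = m + s + 2 by omega] at ratio
    rw [show 2 * (m + 1) + s = 2 * m + s + 2 by ring]
    zify at difference ratio ⊢
    linear_combination (m + s + 2 : ℤ) * difference + ratio

end BallotNumbers

section Completions

/-- The number of ways to use a given critical site within `m` further steps and end with exactly
one occurrence of 1-2-3 and none of 1-23, for a permutation whose `s` largest entries decrease. -/
def criticalCompletions : ℕ → ℕ → ℕ
  | 0, _ => 0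
  | m + 1, s => ballot m (s + 1)

lemma criticalCompletions_succ (m s : ℕ) :
    criticalCompletions (m + 1) s = criticalCompletions m (s + 1) + ballot m s := by
  cases m with
  | zero => simp [criticalCompletions, ballot]
  | succ m => rw [criticalCompletions, criticalCompletions, ballot_succ_succ, add_comm]

/-- The number of ways to prepend a second largest entry and later use one given critical site
created by it, within `m` steps. -/
def secondMaxCompletions : ℕ → ℕ
  | 0 => 0
  | m + 1 => criticalCompletions m 1

/-- The number of ways to reach, in `m` steps, exactly one occurrence of 1-2-3 and none of 1-23,
starting from a 1-2-3-avoider with no critical site that begins with its maximum and whose `s`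
largest entries decrease (`s` maximal). -/
def avoiderCompletions : ℕ → ℕ → ℕ
  | 0, _ => 0
  | m + 1, s => avoiderCompletions m (s + 1) +
      ∑ i ∈ range s, (avoiderCompletions m (i + 1) + (i + 1) * secondMaxCompletions m)

lemma avoiderCompletions_succ_succ (m s : ℕ) :
    avoiderCompletions (m + 1) (s + 1) = avoiderCompletions (m + 1) s +
      avoiderCompletions m (s + 2) + (s + 1) * secondMaxCompletions m := by
  rw [avoiderCompletions, avoiderCompletions, sum_range_succ]
  ring

lemma avoiderCompletions_add_ballot (m s : ℕ) :
    avoiderCompletions (m + 2) s + 2 * ballot m (s + 3) + s * ballot m 2 + ballot (m + 1) 2 =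
      ballot (m + 1) (s + 3) + ballot m 2 := by
  induction m generalizing s with
  | zero =>
    simp [avoiderCompletions, secondMaxCompletions, criticalCompletions, ballot]; ring
  | succ m ihm =>
    induction s with
    | zero =>
      have ih := ihm 1
      have first : avoiderCompletions (m + 3) 0 = avoiderCompletions (m + 2) 1 := by
        simp [avoiderCompletions]
      have := ballot_succ_succ (m + 1) 2
      have := ballot_succ_succ m 2
      have := ballot_succ_succ m 3
      grind
    | succ s ihs =>
      have ih := ihm (s + 2)
      have := ballot_succ_succ (m + 1) (s + 3)
      have := ballot_succ_succ m (s + 3)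
      have := ballot_succ_succ m (s + 4)
      rw [avoiderCompletions_succ_succ, secondMaxCompletions, criticalCompletions]
      grind

lemma avoiderCompletions_add_four (m : ℕ) : avoiderCompletions (m + 4) 0 = ballot m 6 := by
  have := avoiderCompletions_add_ballot (m + 2) 0
  have := ballot_succ_succ (m + 2) 2
  have := ballot_succ_succ (m + 1) 2
  have := ballot_succ_succ (m + 1) 3
  have := ballot_succ_succ m 4
  grind

end Completions

variable {n : ℕ}

section Prepend

/-- The permutation of length `n + 1` whose first entry has exactly `u` larger entries and whose
remaining entries are ordered as in `π`. -/
def prepend (u : Fin (n + 1)) (π : Perm (Fin n)) : Perm (Fin (n + 1)) :=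
  (finSuccEquiv n).trans ((optionCongr π).trans (finSuccEquiv' u.rev).symm)

@[simp] lemma prepend_zero (u : Fin (n + 1)) (π : Perm (Fin n)) : prepend u π 0 = u.rev := by
  simp [prepend]

@[simp] lemma prepend_succ (u : Fin (n + 1)) (π : Perm (Fin n)) (i : Fin n) :
    prepend u π i.succ = u.rev.succAbove (π i) := by
  simp [prepend]

lemma prepend_bijective (n : ℕ) :
    Function.Bijective fun p : Fin (n + 1) × Perm (Fin n) => prepend p.1 p.2 := by
  rw [Fintype.bijective_iff_injective_and_card]
  refine ⟨fun ⟨u, π⟩ ⟨v, σ⟩ h => ?_, by simp [Fintype.card_perm, Nat.factorial_succ]⟩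
  obtain rfl : u = v := by simpa using congr($h 0)
  have tails : π = σ := Equiv.ext fun i => by simpa using congr($h i.succ)
  rw [tails]

lemma sum_perm_succ {M : Type*} [AddCommMonoid M] (f : Perm (Fin (n + 1)) → M) :
    ∑ π, f π = ∑ π : Perm (Fin n), ∑ u, f (prepend u π) := by
  rw [sum_comm, ← Fintype.sum_prod_type', ← (prepend_bijective n).sum_comp f]

lemma rev_lt_succAbove_rev_iff (u : Fin (n + 1)) (a : Fin n) :
    u.rev < u.rev.succAbove a ↔ n ≤ (u : ℕ) + a := by
  rw [Fin.lt_succAbove_iff_le_castSucc, Fin.le_def, Fin.val_rev, Fin.val_castSucc]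
  omega

lemma le_add_succAbove_rev_iff (u : Fin (n + 1)) (a : Fin n) (x : ℕ) :
    n + 1 ≤ x + (u.rev.succAbove a : ℕ) ↔ n ≤ (if x ≤ u then x else x - 1) + (a : ℕ) := by
  have hu := Fin.val_rev u
  rcases Fin.castSucc_lt_or_lt_succ u.rev a with h | h
  · rw [Fin.succAbove_of_castSucc_lt _ _ h, Fin.val_castSucc]
    rw [Fin.lt_def, Fin.val_castSucc] at h
    split_ifs <;> omega
  · rw [Fin.succAbove_of_lt_succ _ _ h, Fin.val_succ]
    rw [Fin.lt_def, Fin.val_succ] at h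
    split_ifs <;> omega

lemma le_add_rev_iff (u : Fin (n + 1)) (x : ℕ) : n + 1 ≤ x + (u.rev : ℕ) ↔ ¬x ≤ u := by
  rw [Fin.val_rev]
  omega

/-- The number of permutations with property `p` that arise from `π` by prepending `m` entries. -/
def extensionCount (p : (n : ℕ) → Perm (Fin n) → Prop) [∀ n, DecidablePred (p n)] :
    ℕ → {n : ℕ} → Perm (Fin n) → ℕ
  | 0, n, π => if p n π then 1 else 0
  | m + 1, _, π => ∑ u, extensionCount p m (prepend u π)

variable (p : (n : ℕ) → Perm (Fin n) → Prop) [∀ n, DecidablePred (p n)]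

lemma sum_extensionCount (m n : ℕ) :
    ∑ π : Perm (Fin n), extensionCount p m π =
      extensionCount p (m + n) (1 : Perm (Fin 0)) := by
  induction n generalizing m with
  | zero => exact Fintype.sum_unique _
  | succ n ih => rw [sum_perm_succ, ← add_assoc, add_right_comm, ← ih]; rfl

lemma ncard_eq_extensionCount (n : ℕ) :
    {π : Perm (Fin n) | p n π}.ncard = extensionCount p n (1 : Perm (Fin 0)) := by
  rw [Set.ncard_eq_toFinset_card', Set.toFinset_ofPred, card_filter]
  exact (sum_extensionCount p 0 n).trans (by rw [zero_add])

end Prepend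

section TopEntries

/-- The number of pairs of positions `j < k` with `π j < π k` and `π j` among the `x` largest
entries. -/
def topNoninversions (π : Perm (Fin n)) (x : ℕ) : ℕ :=
  #{t : Fin n × Fin n | t.1 < t.2 ∧ π t.1 < π t.2 ∧ n ≤ x + (π t.1 : ℕ)}

/-- The number of those pairs in `topNoninversions` whose positions are adjacent. -/
def topAscents (π : Perm (Fin n)) (x : ℕ) : ℕ :=
  #{t : Fin n × Fin n | t.1 < t.2 ∧ (t.2 : ℕ) = t.1 + 1 ∧ π t.1 < π t.2 ∧ n ≤ x + (π t.1 : ℕ)}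

/-- The first entry of `π` is among the `x` largest; false for the empty permutation. -/
def HeadInTop (π : Perm (Fin n)) (x : ℕ) : Prop :=
  ∃ i : Fin n, (i : ℕ) = 0 ∧ n ≤ x + (π i : ℕ)

instance (π : Perm (Fin n)) (x : ℕ) : Decidable (HeadInTop π x) :=
  inferInstanceAs (Decidable (∃ _, _))

lemma topAscents_le_topNoninversions (π : Perm (Fin n)) (x : ℕ) :
    topAscents π x ≤ topNoninversions π x :=
  card_le_card <| monotone_filter_right _ fun _ _ h => ⟨h.1, h.2.2⟩

lemma occ1_23_le_occ123 (π : Perm (Fin n)) : occ1_23 π ≤ occ123 π :=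
  card_le_card <| monotone_filter_right _ fun _ _ h => ⟨h.1, h.2.1, h.2.2.2⟩

lemma card_top (π : Perm (Fin n)) {x : ℕ} (hx : x ≤ n) :
    #{k : Fin n | n ≤ x + (π k : ℕ)} = x := by
  have toRev : #{k : Fin n | n ≤ x + (π k : ℕ)} = #{i : Fin n | (i : ℕ) < x} :=
    card_bijective (π.trans Fin.revPerm) (π.trans Fin.revPerm).bijective fun k => by
      simp; omega
  rw [toRev, Fin.card_filter_val_lt, min_eq_right hx]

lemma card_head_in_top (π : Perm (Fin n)) (x : ℕ) :
    #{k : Fin n | (k : ℕ) = 0 ∧ n ≤ x + (π k : ℕ)} = if HeadInTop π x then 1 else 0 := by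
  split_ifs with h
  · obtain ⟨i, hi, htop⟩ := h
    exact card_eq_one.2 ⟨i, by ext k; grind⟩
  · exact card_eq_zero.2 (filter_false_of_mem fun k _ hk => h ⟨k, hk⟩)

lemma headInTop_prepend (u : Fin (n + 1)) (π : Perm (Fin n)) (x : ℕ) :
    HeadInTop (prepend u π) x ↔ (u : ℕ) < x := by
  rw [← not_le, ← le_add_rev_iff, HeadInTop, Fin.exists_fin_succ]
  simp

lemma card_filter_pairs_succ (q : Fin (n + 1) → Fin (n + 1) → Prop) [DecidableRel q] :
    #{t : Fin (n + 1) × Fin (n + 1) | t.1 < t.2 ∧ q t.1 t.2} =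
      #{k : Fin n | q 0 k.succ} + #{t : Fin n × Fin n | t.1 < t.2 ∧ q t.1.succ t.2.succ} := by
  simp only [card_filter, Fintype.sum_prod_type]
  simp [Fin.sum_univ_succ, -sum_boole]

lemma card_filter_triples_succ (q : Fin (n + 1) → Fin (n + 1) → Fin (n + 1) → Prop)
    [∀ i j k, Decidable (q i j k)] :
    #{t : Fin (n + 1) × Fin (n + 1) × Fin (n + 1) |
        t.1 < t.2.1 ∧ t.2.1 < t.2.2 ∧ q t.1 t.2.1 t.2.2} =
      #{t : Fin n × Fin n | t.1 < t.2 ∧ q 0 t.1.succ t.2.succ} +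
      #{t : Fin n × Fin n × Fin n |
        t.1 < t.2.1 ∧ t.2.1 < t.2.2 ∧ q t.1.succ t.2.1.succ t.2.2.succ} := by
  simp only [card_filter, Fintype.sum_prod_type]
  simp [Fin.sum_univ_succ, -sum_boole]

lemma occ123_prepend (u : Fin (n + 1)) (π : Perm (Fin n)) :
    occ123 (prepend u π) = occ123 π + topNoninversions π u := by
  rw [occ123, card_filter_triples_succ fun i j k =>
    prepend u π i < prepend u π j ∧ prepend u π j < prepend u π k, add_comm]
  simp [occ123, topNoninversions, rev_lt_succAbove_rev_iff, and_comm]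

lemma occ1_23_prepend (u : Fin (n + 1)) (π : Perm (Fin n)) :
    occ1_23 (prepend u π) = occ1_23 π + topAscents π u := by
  rw [occ1_23, card_filter_triples_succ fun i j k =>
    (k : ℕ) = j + 1 ∧ prepend u π i < prepend u π j ∧ prepend u π j < prepend u π k, add_comm]
  simp [occ1_23, topAscents, rev_lt_succAbove_rev_iff, and_comm]

lemma topNoninversions_prepend (u : Fin (n + 1)) (π : Perm (Fin n)) (x : ℕ) :
    topNoninversions (prepend u π) x =
      if x ≤ u then topNoninversions π x else u + topNoninversions π (x - 1) := by
  have hu := card_top π u.is_le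
  rw [topNoninversions, card_filter_pairs_succ fun j k =>
    prepend u π j < prepend u π k ∧ n + 1 ≤ x + (prepend u π j : ℕ)]
  simp only [prepend_zero, prepend_succ, rev_lt_succAbove_rev_iff, le_add_rev_iff,
    le_add_succAbove_rev_iff, Fin.succAbove_lt_succAbove_iff]
  split_ifs with hx <;> simp [hx, hu, topNoninversions]

lemma topAscents_prepend (u : Fin (n + 1)) (π : Perm (Fin n)) (x : ℕ) :
    topAscents (prepend u π) x =
      if x ≤ u then topAscents π x
      else (if HeadInTop π u then 1 else 0) + topAscents π (x - 1) := by
  have hu := card_head_in_top π u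
  rw [topAscents, card_filter_pairs_succ fun j k => (k : ℕ) = j + 1 ∧
    prepend u π j < prepend u π k ∧ n + 1 ≤ x + (prepend u π j : ℕ)]
  simp only [prepend_zero, prepend_succ, rev_lt_succAbove_rev_iff, le_add_rev_iff,
    le_add_succAbove_rev_iff, Fin.succAbove_lt_succAbove_iff]
  by_cases hx : x ≤ u <;> simp [hx, hu, topAscents]

end TopEntries

section Sites

/-- The `s` largest entries of `π` decrease and `s ≤ n` is maximal with this property; prepending an
entry with `u` larger ones then creates no occurrence of 1-2-3 exactly when `u ≤ s`. -/
structure LastFreeSite (π : Perm (Fin n)) (s : ℕ) : Prop where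
  le : s ≤ n
  free_iff : ∀ x ≤ n, topNoninversions π x = 0 ↔ x ≤ s

/-- Prepending an entry with `u` larger ones creates one occurrence of 1-2-3 and none of 1-23
exactly for the `t` values `s < u ≤ s + t`. -/
structure CriticalSites (π : Perm (Fin n)) (s t : ℕ) : Prop where
  le : s + t ≤ n
  critical_iff : ∀ x ≤ n, topNoninversions π x = 1 ∧ topAscents π x = 0 ↔ s < x ∧ x ≤ s + t

variable {π : Perm (Fin n)} {u : Fin (n + 1)} {s t : ℕ}

lemma LastFreeSite.prepend_zero (h : LastFreeSite π s) : LastFreeSite (prepend 0 π) (s + 1) where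
  le := by have := h.le; omega
  free_iff x hx := by
    have := h.free_iff (x - 1) (Nat.sub_le_of_le_add hx)
    have := h.free_iff 0
    rw [topNoninversions_prepend, Fin.val_zero]
    grind

lemma LastFreeSite.prepend_of_le (h : LastFreeSite π s) (hu₀ : 0 < (u : ℕ)) (hu : (u : ℕ) ≤ s) :
    LastFreeSite (prepend u π) u where
  le := u.is_le'
  free_iff x hx := by
    have := h.free_iff x
    have := h.free_iff (x - 1) (Nat.sub_le_of_le_add hx)
    rw [topNoninversions_prepend]
    grind

lemma LastFreeSite.prepend_of_lt (h : LastFreeSite π s) (hu : s < (u : ℕ)) :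
    LastFreeSite (prepend u π) s where
  le := by have := h.le; omega
  free_iff x _ := by
    have := h.free_iff x
    rw [topNoninversions_prepend]
    grind

lemma CriticalSites.prepend_zero (h : CriticalSites π s t) :
    CriticalSites (prepend 0 π) (s + 1) t where
  le := by have := h.le; omega
  critical_iff x hx := by
    have := h.critical_iff (x - 1) (Nat.sub_le_of_le_add hx)
    have := h.critical_iff 0
    have head : ¬HeadInTop π 0 := by simp [HeadInTop]
    rw [topNoninversions_prepend, topAscents_prepend, Fin.val_zero, if_neg head]
    grind

-- For `x > u` the new entry is in `u` noninversions among the `x` largest, so a critical site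
-- forces `u = 1`; that noninversion is an ascent exactly when `π` starts with its maximum.
lemma LastFreeSite.criticalSites_prepend (h : LastFreeSite π s) (hu₀ : 0 < (u : ℕ))
    (hu : (u : ℕ) ≤ s) :
    CriticalSites (prepend u π) u (if (u : ℕ) = 1 ∧ ¬HeadInTop π 1 then s else 0) where
  le := by have := h.le; grind
  critical_iff x hx := by
    have := h.free_iff x
    have := h.free_iff (x - 1) (Nat.sub_le_of_le_add hx)
    have := topAscents_le_topNoninversions π (x - 1)
    rw [topNoninversions_prepend, topAscents_prepend]
    grind

end Sites

section Counting

variable {π : Perm (Fin n)} {u : Fin (n + 1)} {s t : ℕ}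

/-- Exactly one occurrence of 1-2-3 and no occurrence of 1-23. -/
abbrev IsGood (n : ℕ) (π : Perm (Fin n)) : Prop := occ123 π = 1 ∧ occ1_23 π = 0

lemma extensionCount_eq_zero (m : ℕ) (h : 2 ≤ occ123 π ∨ 1 ≤ occ1_23 π) :
    extensionCount IsGood m π = 0 := by
  induction m generalizing n with
  | zero => exact if_neg (by grind)
  | succ m ih =>
    refine sum_eq_zero fun u _ => ih ?_
    rw [occ123_prepend, occ1_23_prepend]
    omega

lemma LastFreeSite.occ123_prepend_eq_zero (hs : LastFreeSite π s) (avoids : occ123 π = 0)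
    (hu : (u : ℕ) ≤ s) : occ123 (prepend u π) = 0 := by
  rw [occ123_prepend, avoids, (hs.free_iff u u.is_le).2 hu]

lemma LastFreeSite.isGood_prepend (hs : LastFreeSite π s) (good : IsGood n π)
    (hu : (u : ℕ) ≤ s) : IsGood (n + 1) (prepend u π) := by
  have := topAscents_le_topNoninversions π u
  have := hs.free_iff u u.is_le
  rw [IsGood, occ123_prepend, occ1_23_prepend]
  omega

lemma LastFreeSite.extensionCount_prepend_eq_zero (m : ℕ) (hs : LastFreeSite π s)
    (good : IsGood n π) (hu : s < (u : ℕ)) : extensionCount IsGood m (prepend u π) = 0 := by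
  have := hs.free_iff u u.is_le
  refine extensionCount_eq_zero m (.inl ?_)
  rw [occ123_prepend]
  omega

lemma CriticalSites.isGood_prepend (ht : CriticalSites π s t) (avoids : occ123 π = 0)
    (hu : s < (u : ℕ)) (hut : (u : ℕ) ≤ s + t) : IsGood (n + 1) (prepend u π) := by
  obtain ⟨one, none⟩ := (ht.critical_iff u u.is_le).2 ⟨hu, hut⟩
  have avoids' : occ1_23 π = 0 := Nat.eq_zero_of_le_zero (avoids ▸ occ1_23_le_occ123 π)
  simp [IsGood, occ123_prepend, occ1_23_prepend, avoids, avoids', one, none]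

lemma CriticalSites.extensionCount_prepend_eq_zero (m : ℕ) (ht : CriticalSites π s t)
    (hs : LastFreeSite π s) (hu : s + t < (u : ℕ)) :
    extensionCount IsGood m (prepend u π) = 0 := by
  have := hs.free_iff u u.is_le
  have := ht.critical_iff u u.is_le
  refine extensionCount_eq_zero m ?_
  rw [occ123_prepend, occ1_23_prepend]
  omega

lemma sum_univ_of_piecewise {M : Type*} [AddCommMonoid M] {c : M} (b : ℕ → M)
    {f : Fin (n + 1) → M} (le : s + t ≤ n)
    (low : ∀ u : Fin (n + 1), 0 < (u : ℕ) → (u : ℕ) ≤ s → f u = b u)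
    (mid : ∀ u : Fin (n + 1), s < (u : ℕ) → (u : ℕ) ≤ s + t → f u = c)
    (high : ∀ u : Fin (n + 1), s + t < (u : ℕ) → f u = 0) :
    ∑ u, f u = f 0 + ∑ i ∈ range s, b (i + 1) + t • c := by
  obtain ⟨r, rfl⟩ := Nat.exists_eq_add_of_le le
  have sum_low : ∑ i : Fin s, f ((i.castAdd t).castAdd r).succ = ∑ i ∈ range s, b (i + 1) := by
    rw [← Fin.sum_univ_eq_sum_range fun i => b (i + 1)]
    exact Fintype.sum_congr _ _ fun i => low _ (Nat.succ_pos i) i.is_lt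
  have sum_mid : ∑ i : Fin t, f ((i.natAdd s).castAdd r).succ = t • c :=
    (Fintype.sum_congr _ _ fun i => mid _ (by simp) (by simp)).trans (by simp)
  have sum_high : ∑ i : Fin r, f (i.natAdd (s + t)).succ = 0 :=
    sum_eq_zero fun i _ => high _ (by simp)
  rw [Fin.sum_univ_succ, Fin.sum_univ_add, Fin.sum_univ_add, sum_low, sum_mid, sum_high, add_zero,
    ← add_assoc]

lemma extensionCount_of_isGood (m : ℕ) (good : IsGood n π) (hs : LastFreeSite π s) :
    extensionCount IsGood m π = ballot m s := by
  induction m generalizing n s with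
  | zero => exact if_pos good
  | succ m ih =>
    have start : extensionCount IsGood m (prepend 0 π) = ballot m (s + 1) :=
      ih (hs.isGood_prepend good (Nat.zero_le s)) hs.prepend_zero
    rw [extensionCount, sum_univ_of_piecewise (t := 0) (c := 0) (ballot m) hs.le
      (fun u hu₀ hu => ih (hs.isGood_prepend good hu) (hs.prepend_of_le hu₀ hu)) (by omega)
      (fun u => hs.extensionCount_prepend_eq_zero m good), start, ballot, sum_range_succ,
      zero_smul, add_zero, add_comm]

lemma sum_range_mul_criticalCompletions (m s : ℕ) (P : Prop) [Decidable P] :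
    ∑ i ∈ range s, (if i + 1 = 1 ∧ ¬P then s else 0) * criticalCompletions m (i + 1) =
      if P then 0 else s * secondMaxCompletions (m + 1) := by
  cases s with
  | zero => simp
  | succ s =>
    rw [sum_range_succ']
    simp [secondMaxCompletions]

lemma extensionCount_of_occ123_eq_zero (m : ℕ) (avoids : occ123 π = 0) (hs : LastFreeSite π s)
    (ht : CriticalSites π s t) :
    extensionCount IsGood m π = avoiderCompletions m s +
      (if HeadInTop π 1 then 0 else s * secondMaxCompletions m) + t * criticalCompletions m s := by
  induction m generalizing n s t with
  | zero =>
    simp [extensionCount, avoids, avoiderCompletions, secondMaxCompletions, criticalCompletions]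
  | succ m ih =>
    have start : extensionCount IsGood m (prepend 0 π) =
        avoiderCompletions m (s + 1) + t * criticalCompletions m (s + 1) := by
      rw [ih (hs.occ123_prepend_eq_zero avoids (Nat.zero_le s)) hs.prepend_zero ht.prepend_zero,
        if_pos ((headInTop_prepend 0 π 1).2 one_pos), add_zero]
    let freeTerm (u : ℕ) : ℕ := avoiderCompletions m u + u * secondMaxCompletions m +
      (if u = 1 ∧ ¬HeadInTop π 1 then s else 0) * criticalCompletions m u
    have free (u : Fin (n + 1)) (hu₀ : 0 < (u : ℕ)) (hu : (u : ℕ) ≤ s) :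
        extensionCount IsGood m (prepend u π) = freeTerm u := by
      rw [ih (hs.occ123_prepend_eq_zero avoids hu) (hs.prepend_of_le hu₀ hu)
        (hs.criticalSites_prepend hu₀ hu), if_neg (by rw [headInTop_prepend]; omega)]
    have critical (u : Fin (n + 1)) (hu : s < (u : ℕ)) (hut : (u : ℕ) ≤ s + t) :
        extensionCount IsGood m (prepend u π) = ballot m s :=
      extensionCount_of_isGood m (ht.isGood_prepend avoids hu hut) (hs.prepend_of_lt hu)
    rw [extensionCount, sum_univ_of_piecewise freeTerm ht.le free critical
      fun u => ht.extensionCount_prepend_eq_zero m hs, start, sum_add_distrib,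
      sum_range_mul_criticalCompletions, criticalCompletions_succ, avoiderCompletions, smul_eq_mul]
    ring

lemma ncard_isGood (n : ℕ) : {π : Perm (Fin n) | IsGood n π}.ncard = avoiderCompletions n 0 := by
  have lastFreeSite : LastFreeSite (1 : Perm (Fin 0)) 0 := ⟨le_rfl, by simp [topNoninversions]⟩
  have criticalSites : CriticalSites (1 : Perm (Fin 0)) 0 0 := ⟨le_rfl, by simp [topNoninversions]⟩
  rw [ncard_eq_extensionCount, extensionCount_of_occ123_eq_zero n rfl lastFreeSite criticalSites]
  simp

end Counting

end Single123

/-- The number of permutations of length `n ≥ 4` with exactly one occurrence of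
1-2-3 and no occurrence of the vincular pattern 1-23 is
`(7/(n+3)) * C(2n-2, n+2)`. -/
theorem single_123_no_1_23_count (n : ℕ) (hn : 4 ≤ n) :
    ({π : Equiv.Perm (Fin n) | occ123 π = 1 ∧ occ1_23 π = 0}.ncard : ℚ)
      = (7 / (n + 3 : ℚ)) * (Nat.choose (2 * n - 2) (n + 2)) := by
  obtain ⟨m, rfl⟩ := Nat.exists_eq_add_of_le' hn
  have count : {π : Equiv.Perm (Fin (m + 4)) | occ123 π = 1 ∧ occ1_23 π = 0}.ncard =
      Single123.ballot m 6 := by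
    rw [← Single123.avoiderCompletions_add_four, ← Single123.ncard_isGood]
  have symm : (2 * (m + 4) - 2).choose (m + 4 + 2) = (2 * m + 6).choose m := by
    rw [show 2 * (m + 4) - 2 = 2 * m + 6 by omega]
    exact Nat.choose_symm_of_eq_add (by ring)
  have closed : (Single123.ballot m 6 * (m + 6 + 1) : ℚ) = (6 + 1) * (2 * m + 6).choose m :=
    mod_cast Single123.ballot_mul m 6
  rw [count, symm]
  push_cast
  field_simp
  linear_combination closed
end

section
/- For n ≥ 5, the number of permutations of length n with exactly one occurrence of the classical pattern 1-2-3, no occurrence of the vincular pattern 1-23, and no occurrence of the vincular pattern 12-3, equals (8/(n+3)) * C(2n-3, n+2). -/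
/-!
Complementation turns 1-2-3 into 3-2-1. If `π` has exactly one occurrence of 3-2-1, at positions
`i < j < k`, then `j` is a fixed point and only the entries at `i` and `k` cross it. So `π` splits
at `j`, which is kept in both halves, into two 3-2-1-avoiding permutations: the left one has its
maximum at `i` and the right one its minimum at `k`. Conversely any two such permutations can be
glued; this is the idea of Burstein's proof of Noonan's formula.

The two vincular patterns are absent exactly when neither `i` nor `k` is adjacent to `j`. Removing
the maximum of a 3-2-1-avoider at position `q` leaves a 3-2-1-avoider that increases from `q` on.
Counting these by ballot numbers, i.e. coefficients of powers of the Catalan series `c`, gives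
`X ^ 2 * c ^ 4` as the generating function of each half. The total is thus a coefficient of
`X ^ 4 * c ^ 8`.
-/

namespace Single123

open Equiv

section Gluing

variable {α β : Type*} [LinearOrder α] [LinearOrder β]

/-- The entry of `f` at `y` is the middle entry of an occurrence of the pattern 3-2-1. -/
def IsMiddle321 (f : α → β) (y : α) : Prop :=
  (∃ x < y, f y < f x) ∧ ∃ z > y, f z < f y

/-- `f` has no occurrence of the pattern 3-2-1, expressed through the absence of middle entries. -/
def Avoids321 (f : α → β) : Prop :=
  ∀ y, ¬ IsMiddle321 f y

/-- The only occurrence of 3-2-1 in `π` is at the positions `i < j < k`. -/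
structure IsUnique321 (π : Perm α) (i j k : α) : Prop where
  lt_left : i < j
  lt_right : j < k
  desc_left : π j < π i
  desc_right : π k < π j
  unique : ∀ ⦃x y z⦄, x < y → y < z → π y < π x → π z < π y → x = i ∧ y = j ∧ z = k

/-- The shape that a unique occurrence of 3-2-1 at `i < j < k` forces on `π`: the middle entry is
a fixed point, and the entries at `i` and `k` are the only ones that cross it. -/
structure SplitsAt (π : Perm α) (i j k : α) : Prop where
  lt_left : i < j
  lt_right : j < k
  apply_pivot : π j = j
  lt_apply : j < π i
  apply_lt : π k < j
  apply_lt_of_lt : ∀ ⦃x⦄, x < j → x ≠ i → π x < j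
  lt_apply_of_lt : ∀ ⦃x⦄, j < x → x ≠ k → j < π x

/-- `σ` is the left half of `π`: the entry at `i`, which crosses `j`, becomes the maximum `j`, and
the entry at `k`, which crosses in the other direction, is moved to position `j`. It is encoded as a
permutation of all of `α` that fixes the positions beyond `j`. -/
structure IsLeftPart (π σ : Perm α) (i j k : α) : Prop where
  apply_of_gt : ∀ ⦃x⦄, j < x → σ x = x
  apply_left : σ i = j
  apply_pivot : σ j = π k
  apply_of_lt : ∀ ⦃x⦄, x < j → x ≠ i → σ x = π x

/-- The mirror image of `IsLeftPart`, for the positions from `j` on. -/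
def IsRightPart (π τ : Perm α) (i j k : α) : Prop :=
  IsLeftPart (α := αᵒᵈ) π τ k j i

variable {π π' σ σ' τ τ' : Perm α} {i j k x y : α}

theorem avoids321_dual {f : α → α} :
    Avoids321 (α := αᵒᵈ) (β := αᵒᵈ) f ↔ Avoids321 f :=
  forall_congr' fun _ => not_congr and_comm

theorem IsUnique321.dual (h : IsUnique321 π i j k) : IsUnique321 (α := αᵒᵈ) π k j i where
  lt_left := h.lt_right
  lt_right := h.lt_left
  desc_left := h.desc_right
  desc_right := h.desc_left
  unique _ _ _ hxy hyz hf hf' :=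
    have ⟨hx, hy, hz⟩ := h.unique hyz hxy hf' hf
    ⟨hz, hy, hx⟩

theorem SplitsAt.dual (h : SplitsAt π i j k) : SplitsAt (α := αᵒᵈ) π k j i where
  lt_left := h.lt_right
  lt_right := h.lt_left
  apply_pivot := h.apply_pivot
  lt_apply := h.apply_lt
  apply_lt := h.lt_apply
  apply_lt_of_lt := h.lt_apply_of_lt
  lt_apply_of_lt := h.apply_lt_of_lt

theorem apply_eq_self_of_lt_iff_lt [Finite α] (h : ∀ x, π x < π j ↔ x < j) : π j = j := by
  have image_Iio : π '' Set.Iio j = Set.Iio (π j) := by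
    ext y
    obtain ⟨x, rfl⟩ := π.surjective y
    simp [h]
  have ncard_Iio : (Set.Iio (π j)).ncard = (Set.Iio j).ncard := by
    rw [← image_Iio, Set.ncard_image_of_injective _ π.injective]
  apply Set.Iio_injective
  rcases le_total j (π j) with hj | hj
  · exact (Set.eq_of_subset_of_ncard_le (Set.Iio_subset_Iio hj) ncard_Iio.le).symm
  · exact Set.eq_of_subset_of_ncard_le (Set.Iio_subset_Iio hj) ncard_Iio.ge

theorem IsUnique321.apply_lt_of_lt (h : IsUnique321 π i j k) (hx : x < j) (hxi : x ≠ i) :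
    π x < π j := by
  by_contra! hle
  exact hxi (h.unique hx h.lt_right (hle.lt_of_ne (π.injective.ne hx.ne')) h.desc_right).1

theorem IsUnique321.lt_apply_of_lt (h : IsUnique321 π i j k) (hx : j < x) (hxk : x ≠ k) :
    π j < π x :=
  h.dual.apply_lt_of_lt hx hxk

/-- Exchanging the values at `i` and `k` leaves exactly the positions before `j` with values
below that of `j`. -/
theorem IsUnique321.apply_pivot [Finite α] (h : IsUnique321 π i j k) : π j = j := by
  have hj : (π * swap i k) j = π j := by
    rw [Perm.mul_apply, swap_apply_of_ne_of_ne h.lt_left.ne' h.lt_right.ne]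
  rw [← hj]
  refine apply_eq_self_of_lt_iff_lt fun x => ?_
  rw [hj, Perm.mul_apply]
  rcases eq_or_ne x i with rfl | hxi
  · simp [h.desc_right, h.lt_left]
  rcases eq_or_ne x k with rfl | hxk
  · rw [swap_apply_right]
    exact iff_of_false h.desc_left.not_gt h.lt_right.not_gt
  rw [swap_apply_of_ne_of_ne hxi hxk]
  refine ⟨fun hx => ?_, fun hx => h.apply_lt_of_lt hx hxi⟩
  by_contra! hjx
  rcases hjx.eq_or_lt with rfl | hjx
  · exact hx.false
  · exact hx.not_gt (h.lt_apply_of_lt hjx hxk)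

theorem IsUnique321.splitsAt [Finite α] (h : IsUnique321 π i j k) : SplitsAt π i j k where
  lt_left := h.lt_left
  lt_right := h.lt_right
  apply_pivot := h.apply_pivot
  lt_apply := h.apply_pivot ▸ h.desc_left
  apply_lt := h.apply_pivot ▸ h.desc_right
  apply_lt_of_lt _ hx hxi := (h.apply_lt_of_lt hx hxi).trans_eq h.apply_pivot
  lt_apply_of_lt _ hx hxk := h.apply_pivot.symm.trans_lt (h.lt_apply_of_lt hx hxk)

theorem IsLeftPart.exists_lt_apply_iff (hπ : SplitsAt π i j k) (hσ : IsLeftPart π σ i j k)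
    (hy : y < j) : (∃ x < y, σ y < σ x) ↔ ∃ x < y, π y < π x := by
  refine exists_congr fun x => and_congr_right fun hxy => ?_
  have hx := hxy.trans hy
  rcases eq_or_ne y i with rfl | hyi
  · have hπx := hπ.apply_lt_of_lt hx hxy.ne
    rw [hσ.apply_left, hσ.apply_of_lt hx hxy.ne]
    exact iff_of_false hπx.not_gt (hπx.trans hπ.lt_apply).not_gt
  · rw [hσ.apply_of_lt hy hyi]
    rcases eq_or_ne x i with rfl | hxi
    · have hπy := hπ.apply_lt_of_lt hy hyi
      rw [hσ.apply_left]
      exact iff_of_true hπy (hπy.trans hπ.lt_apply)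
    · rw [hσ.apply_of_lt hx hxi]

theorem IsLeftPart.exists_apply_lt_iff (hπ : SplitsAt π i j k) (hσ : IsLeftPart π σ i j k)
    (hy : y < j) (hyi : y ≠ i) : (∃ z > y, σ z < σ y) ↔ ∃ z > y, π z < π y := by
  have hπy := hπ.apply_lt_of_lt hy hyi
  rw [hσ.apply_of_lt hy hyi]
  constructor
  · rintro ⟨z, hyz, hz⟩
    rcases lt_trichotomy z j with hzj | rfl | hjz
    · have hzi : z ≠ i := fun h => (hz.trans hπy).ne (h ▸ hσ.apply_left)
      exact ⟨z, hyz, hσ.apply_of_lt hzj hzi ▸ hz⟩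
    · exact ⟨k, hy.trans hπ.lt_right, hσ.apply_pivot ▸ hz⟩
    · exact absurd ((hσ.apply_of_gt hjz ▸ hz).trans hπy) hjz.not_gt
  · rintro ⟨z, hyz, hz⟩
    rcases lt_trichotomy z j with hzj | rfl | hjz
    · have hzi : z ≠ i := fun h => (hz.trans hπy).not_gt (h ▸ hπ.lt_apply)
      exact ⟨z, hyz, hσ.apply_of_lt hzj hzi ▸ hz⟩
    · exact absurd (hπ.apply_pivot ▸ hz) hπy.not_gt
    · have hzk : z = k := by
        by_contra hzk
        exact (hz.trans hπy).not_gt (hπ.lt_apply_of_lt hjz hzk)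
      exact ⟨j, hy, by rwa [hσ.apply_pivot, ← hzk]⟩

theorem IsLeftPart.isMiddle321_iff (hπ : SplitsAt π i j k) (hσ : IsLeftPart π σ i j k)
    (hy : y < j) : IsMiddle321 σ y ↔ IsMiddle321 π y := by
  rcases eq_or_ne y i with rfl | hyi
  · have no_larger : ¬ ∃ x < y, π y < π x := fun ⟨x, hx, hyx⟩ =>
      (hπ.apply_lt_of_lt (hx.trans hy) hx.ne).not_gt (hπ.lt_apply.trans hyx)
    exact iff_of_false (fun h => no_larger ((hσ.exists_lt_apply_iff hπ hy).1 h.1))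
      fun h => no_larger h.1
  · exact and_congr (hσ.exists_lt_apply_iff hπ hy) (hσ.exists_apply_lt_iff hπ hy hyi)

theorem IsLeftPart.not_isMiddle321 (hπ : SplitsAt π i j k) (hσ : IsLeftPart π σ i j k)
    (hy : j ≤ y) : ¬ IsMiddle321 σ y := by
  have hσy : σ y ≤ y := by
    rcases hy.eq_or_lt with rfl | hy
    · exact hσ.apply_pivot.trans_le hπ.apply_lt.le
    · exact (hσ.apply_of_gt hy).le
  rintro ⟨-, z, hz, hzy⟩
  rw [hσ.apply_of_gt (hy.trans_lt hz)] at hzy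
  exact (hzy.trans_le hσy).not_gt hz

theorem IsLeftPart.avoids321_iff (hπ : SplitsAt π i j k) (hσ : IsLeftPart π σ i j k) :
    Avoids321 σ ↔ ∀ y < j, ¬ IsMiddle321 π y :=
  ⟨fun h y hy hm => h y ((hσ.isMiddle321_iff hπ hy).2 hm), fun h y hm =>
    (lt_or_ge y j).elim (fun hy => h y hy ((hσ.isMiddle321_iff hπ hy).1 hm))
      fun hy => hσ.not_isMiddle321 hπ hy hm⟩

theorem IsRightPart.avoids321_iff (hπ : SplitsAt π i j k) (hτ : IsRightPart π τ i j k) :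
    Avoids321 τ ↔ ∀ y > j, ¬ IsMiddle321 π y :=
  avoids321_dual.symm.trans ((IsLeftPart.avoids321_iff hπ.dual hτ).trans
    (forall₂_congr fun _ _ => not_congr and_comm))

theorem SplitsAt.isUnique321_iff (hπ : SplitsAt π i j k) :
    IsUnique321 π i j k ↔ ∀ y ≠ j, ¬ IsMiddle321 π y := by
  constructor
  · rintro h y hyj ⟨⟨x, hxy, hx⟩, z, hyz, hz⟩
    exact hyj (h.unique hxy hyz hx hz).2.1
  · intro h
    refine ⟨hπ.lt_left, hπ.lt_right, ?_, ?_, fun x y z hxy hyz hx hz => ?_⟩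
    · exact hπ.apply_pivot.trans_lt hπ.lt_apply
    · exact hπ.apply_lt.trans_eq hπ.apply_pivot.symm
    · obtain rfl : y = j := by
        by_contra hyj
        exact h y hyj ⟨⟨x, hxy, hx⟩, z, hyz, hz⟩
      rw [hπ.apply_pivot] at hx hz
      refine ⟨?_, rfl, ?_⟩
      · by_contra hxi
        exact hx.not_gt (hπ.apply_lt_of_lt hxy hxi)
      · by_contra hzk
        exact hz.not_gt (hπ.lt_apply_of_lt hyz hzk)

theorem SplitsAt.isUnique321_iff_avoids321 (hπ : SplitsAt π i j k) (hσ : IsLeftPart π σ i j k)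
    (hτ : IsRightPart π τ i j k) : IsUnique321 π i j k ↔ Avoids321 σ ∧ Avoids321 τ := by
  rw [hπ.isUnique321_iff, hσ.avoids321_iff hπ, hτ.avoids321_iff hπ]
  simp only [ne_iff_lt_or_gt, or_imp, forall_and]

theorem SplitsAt.exists_isLeftPart (h : SplitsAt π i j k) : ∃ σ, IsLeftPart π σ i j k := by
  let η := swap j (π i) * π * swap j k
  have apply_left : η i = j := by
    simp [η, swap_apply_of_ne_of_ne h.lt_left.ne (h.lt_left.trans h.lt_right).ne]
  have apply_pivot : η j = π k := by
    simp [η, swap_apply_of_ne_of_ne h.apply_lt.ne (h.apply_lt.trans h.lt_apply).ne]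
  have apply_right : η k = π i := by simp [η, h.apply_pivot]
  have apply_of_ne {x} (hi : x ≠ i) (hj : x ≠ j) (hk : x ≠ k) : η x = π x := by
    simp [η, swap_apply_of_ne_of_ne hj hk,
      swap_apply_of_ne_of_ne (h.apply_pivot ▸ π.injective.ne hj) (π.injective.ne hi)]
  have apply_of_lt {x} (hx : x < j) (hi : x ≠ i) : η x = π x :=
    apply_of_ne hi hx.ne (hx.trans h.lt_right).ne
  have hη x : η x ≤ j ↔ x ≤ j := by
    rcases lt_trichotomy x j with hx | rfl | hx
    · rcases eq_or_ne x i with rfl | hi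
      · simp [apply_left, hx.le]
      · simp [apply_of_lt hx hi, hx.le, (h.apply_lt_of_lt hx hi).le]
    · simp [apply_pivot, h.apply_lt.le]
    · rcases eq_or_ne x k with rfl | hk
      · exact iff_of_false (apply_right ▸ h.lt_apply).not_ge hx.not_ge
      · rw [apply_of_ne (h.lt_left.trans hx).ne' hx.ne' hk]
        exact iff_of_false (h.lt_apply_of_lt hx hk).not_ge hx.not_ge
  have apply_of_le {x} (hx : x ≤ j) : Perm.ofSubtype (η.subtypePerm hη) x = η x :=
    Perm.ofSubtype_apply_of_mem (p := (· ≤ j)) (η.subtypePerm hη) hx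
  exact ⟨Perm.ofSubtype (η.subtypePerm hη),
    fun x hx => Perm.ofSubtype_apply_of_not_mem (p := (· ≤ j)) _ hx.not_ge,
    (apply_of_le h.lt_left.le).trans apply_left,
    (apply_of_le le_rfl).trans apply_pivot,
    fun x hx hi => (apply_of_le hx.le).trans (apply_of_lt hx hi)⟩

theorem SplitsAt.exists_isRightPart (h : SplitsAt π i j k) : ∃ τ, IsRightPart π τ i j k :=
  h.dual.exists_isLeftPart

theorem IsLeftPart.unique (hσ : IsLeftPart π σ i j k) (hσ' : IsLeftPart π σ' i j k) :
    σ = σ' := by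
  ext x
  rcases lt_trichotomy x j with hx | rfl | hx
  · rcases eq_or_ne x i with rfl | hi
    · rw [hσ.apply_left, hσ'.apply_left]
    · rw [hσ.apply_of_lt hx hi, hσ'.apply_of_lt hx hi]
  · rw [hσ.apply_pivot, hσ'.apply_pivot]
  · rw [hσ.apply_of_gt hx, hσ'.apply_of_gt hx]

theorem IsRightPart.unique (hτ : IsRightPart π τ i j k) (hτ' : IsRightPart π τ' i j k) :
    τ = τ' :=
  IsLeftPart.unique (α := αᵒᵈ) hτ hτ'

theorem SplitsAt.ext (hπ : SplitsAt π i j k) (hπ' : SplitsAt π' i j k)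
    (hσ : IsLeftPart π σ i j k) (hσ' : IsLeftPart π' σ i j k)
    (hτ : IsRightPart π τ i j k) (hτ' : IsRightPart π' τ i j k) : π = π' := by
  ext x
  rcases lt_trichotomy x j with hx | rfl | hx
  · rcases eq_or_ne x i with rfl | hi
    · exact hτ.apply_pivot.symm.trans hτ'.apply_pivot
    · exact (hσ.apply_of_lt hx hi).symm.trans (hσ'.apply_of_lt hx hi)
  · exact hπ.apply_pivot.trans hπ'.apply_pivot.symm
  · rcases eq_or_ne x k with rfl | hk
    · exact hσ.apply_pivot.symm.trans hσ'.apply_pivot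
    · exact (hτ.apply_of_lt hx hk).symm.trans (hτ'.apply_of_lt hx hk)

/-- The left parts of the permutations with a unique 3-2-1 at `i < j < k`: the permutations of
`Set.Iic j` that avoid 3-2-1 and have their maximum at `i`, extended by the identity. -/
def leftFactors (i j : α) : Set (Perm α) :=
  {σ | Avoids321 σ ∧ (∀ x, j < x → σ x = x) ∧ σ i = j}

/-- The mirror image of `leftFactors`. -/
def rightFactors (j k : α) : Set (Perm α) :=
  leftFactors (α := αᵒᵈ) k j

/-- The permutation with left part `σ` and right part `τ`. The transposition makes `j` a fixed point
and moves the last entry of `σ` to position `k`. -/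
def glue (j k : α) (σ τ : Perm α) : Perm α :=
  τ * σ * swap j k

theorem apply_lt_of_mem_leftFactors (hσ : σ ∈ leftFactors i j) (hx : x ≤ j) (hxi : x ≠ i) :
    σ x < j := by
  by_contra! hle
  rcases hle.eq_or_lt with h | h
  · exact hxi (σ.injective (h.symm.trans hσ.2.2.symm))
  · exact (hx.trans_lt h).ne' (σ.injective (hσ.2.1 _ h))

theorem lt_apply_of_mem_rightFactors (hτ : τ ∈ rightFactors j k) (hx : j ≤ x) (hxk : x ≠ k) :
    j < τ x :=
  apply_lt_of_mem_leftFactors (α := αᵒᵈ) hτ hx hxk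

theorem glue_apply_left (hij : i < j) (hjk : j < k) (hσ : σ ∈ leftFactors i j) :
    glue j k σ τ i = τ j := by
  rw [glue, Perm.mul_apply, swap_apply_of_ne_of_ne hij.ne (hij.trans hjk).ne, Perm.mul_apply,
    hσ.2.2]

theorem glue_apply_of_gt (hσ : σ ∈ leftFactors i j) (hx : j < x) (hxk : x ≠ k) :
    glue j k σ τ x = τ x := by
  rw [glue, Perm.mul_apply, swap_apply_of_ne_of_ne hx.ne' hxk, Perm.mul_apply, hσ.2.1 x hx]

theorem glue_apply_pivot (hjk : j < k) (hσ : σ ∈ leftFactors i j)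
    (hτ : τ ∈ rightFactors j k) : glue j k σ τ j = j := by
  rw [glue, Perm.mul_apply, swap_apply_left, Perm.mul_apply, hσ.2.1 k hjk]
  exact hτ.2.2

theorem glue_apply_of_lt (hjk : j < k) (hσ : σ ∈ leftFactors i j)
    (hτ : τ ∈ rightFactors j k) (hx : x < j) (hxi : x ≠ i) : glue j k σ τ x = σ x := by
  rw [glue, Perm.mul_apply, swap_apply_of_ne_of_ne hx.ne (hx.trans hjk).ne, Perm.mul_apply]
  exact hτ.2.1 _ (apply_lt_of_mem_leftFactors hσ hx.le hxi)

theorem glue_apply_right (hij : i < j) (hσ : σ ∈ leftFactors i j)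
    (hτ : τ ∈ rightFactors j k) : glue j k σ τ k = σ j := by
  rw [glue, Perm.mul_apply, swap_apply_right, Perm.mul_apply]
  exact hτ.2.1 _ (apply_lt_of_mem_leftFactors hσ le_rfl hij.ne')

theorem splitsAt_glue (hij : i < j) (hjk : j < k) (hσ : σ ∈ leftFactors i j)
    (hτ : τ ∈ rightFactors j k) : SplitsAt (glue j k σ τ) i j k where
  lt_left := hij
  lt_right := hjk
  apply_pivot := glue_apply_pivot hjk hσ hτ
  lt_apply := (lt_apply_of_mem_rightFactors hτ le_rfl hjk.ne).trans_eq
    (glue_apply_left hij hjk hσ).symm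
  apply_lt := (glue_apply_right hij hσ hτ).trans_lt
    (apply_lt_of_mem_leftFactors hσ le_rfl hij.ne')
  apply_lt_of_lt _ hx hxi := (glue_apply_of_lt hjk hσ hτ hx hxi).trans_lt
    (apply_lt_of_mem_leftFactors hσ hx.le hxi)
  lt_apply_of_lt _ hx hxk := (lt_apply_of_mem_rightFactors hτ hx.le hxk).trans_eq
    (glue_apply_of_gt hσ hx hxk).symm

theorem isLeftPart_glue (hij : i < j) (hjk : j < k) (hσ : σ ∈ leftFactors i j)
    (hτ : τ ∈ rightFactors j k) : IsLeftPart (glue j k σ τ) σ i j k where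
  apply_of_gt := hσ.2.1
  apply_left := hσ.2.2
  apply_pivot := (glue_apply_right hij hσ hτ).symm
  apply_of_lt _ hx hxi := (glue_apply_of_lt hjk hσ hτ hx hxi).symm

theorem isRightPart_glue (hij : i < j) (hjk : j < k) (hσ : σ ∈ leftFactors i j)
    (hτ : τ ∈ rightFactors j k) : IsRightPart (glue j k σ τ) τ i j k where
  apply_of_gt := hτ.2.1
  apply_left := hτ.2.2
  apply_pivot := (glue_apply_left hij hjk hσ).symm
  apply_of_lt _ hx hxk := (glue_apply_of_gt hσ hx hxk).symm

theorem IsLeftPart.mem_leftFactors (h : IsLeftPart π σ i j k) (hσ : Avoids321 σ) :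
    σ ∈ leftFactors i j :=
  ⟨hσ, h.apply_of_gt, h.apply_left⟩

theorem IsRightPart.mem_rightFactors (h : IsRightPart π τ i j k) (hτ : Avoids321 τ) :
    τ ∈ rightFactors j k :=
  IsLeftPart.mem_leftFactors (α := αᵒᵈ) h ((avoids321_dual (α := α)).2 hτ)

theorem bijOn_glue [Finite α] (hij : i < j) (hjk : j < k) :
    Set.BijOn (fun p => glue j k p.1 p.2) (leftFactors i j ×ˢ rightFactors j k)
      {π | IsUnique321 π i j k} := by
  refine ⟨?_, ?_, ?_⟩
  · rintro ⟨σ, τ⟩ ⟨hσ, hτ⟩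
    exact ((splitsAt_glue hij hjk hσ hτ).isUnique321_iff_avoids321
      (isLeftPart_glue hij hjk hσ hτ) (isRightPart_glue hij hjk hσ hτ)).2
      ⟨hσ.1, avoids321_dual.1 hτ.1⟩
  · rintro ⟨σ, τ⟩ ⟨hσ, hτ⟩ ⟨σ', τ'⟩ ⟨hσ', hτ'⟩ (h : glue j k σ τ = glue j k σ' τ')
    exact Prod.ext
      ((isLeftPart_glue hij hjk hσ hτ).unique (h ▸ isLeftPart_glue hij hjk hσ' hτ'))
      ((isRightPart_glue hij hjk hσ hτ).unique (h ▸ isRightPart_glue hij hjk hσ' hτ'))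
  · intro π (h : IsUnique321 π i j k)
    obtain ⟨σ, hσ⟩ := h.splitsAt.exists_isLeftPart
    obtain ⟨τ, hτ⟩ := h.splitsAt.exists_isRightPart
    obtain ⟨havσ, havτ⟩ := (h.splitsAt.isUnique321_iff_avoids321 hσ hτ).1 h
    have memσ := hσ.mem_leftFactors havσ
    have memτ := hτ.mem_rightFactors havτ
    exact ⟨(σ, τ), ⟨memσ, memτ⟩, (splitsAt_glue hij hjk memσ memτ).ext h.splitsAt
      (isLeftPart_glue hij hjk memσ memτ) hσ (isRightPart_glue hij hjk memσ memτ) hτ⟩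

theorem ncard_isUnique321 [Finite α] (hij : i < j) (hjk : j < k) :
    {π : Perm α | IsUnique321 π i j k}.ncard
      = (leftFactors i j).ncard * (rightFactors j k).ncard := by
  rw [← (bijOn_glue hij hjk).image_eq, (bijOn_glue hij hjk).injOn.ncard_image,
    Set.ncard_prod]

end Gluing

section Counting

variable {n : ℕ}

/-- The permutation obtained from `σ` by inserting a new maximum at position `q`. -/
def insertMax (q : Fin (n + 1)) (σ : Perm (Fin n)) : Perm (Fin (n + 1)) :=
  (finSuccEquiv' q).trans ((optionCongr σ).trans finSuccEquivLast.symm)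

variable {p : ℕ} {q : Fin (n + 1)} {σ : Perm (Fin n)}

@[simp]
theorem insertMax_apply_self : insertMax q σ q = Fin.last n := by
  simp [insertMax]

@[simp]
theorem insertMax_apply_succAbove (x : Fin n) :
    insertMax q σ (q.succAbove x) = (σ x).castSucc := by
  simp [insertMax]

theorem insertMax_eq_last_iff {x : Fin (n + 1)} : insertMax q σ x = Fin.last n ↔ x = q := by
  rw [← insertMax_apply_self (q := q) (σ := σ), EmbeddingLike.apply_eq_iff_eq]

theorem insertMax_injective (q : Fin (n + 1)) : Function.Injective (insertMax q) := by
  intro σ σ' h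
  ext1 x
  simpa using Equiv.congr_fun h (q.succAbove x)

theorem exists_insertMax_eq (ρ : Perm (Fin (n + 1))) : ∃ q σ, insertMax q σ = ρ := by
  have injective : Function.Injective fun t : Fin (n + 1) × Perm (Fin n) => insertMax t.1 t.2 := by
    rintro ⟨q, σ⟩ ⟨q', σ'⟩ (h : insertMax q σ = insertMax q' σ')
    obtain rfl : q = q' := insertMax_eq_last_iff.1 (h ▸ insertMax_apply_self)
    rw [insertMax_injective q h]
  have bijective := (Fintype.bijective_iff_injective_and_card _).2
    ⟨injective, by simp [Fintype.card_perm, Nat.factorial_succ]⟩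
  obtain ⟨⟨q, σ⟩, h⟩ := bijective.2 ρ
  exact ⟨q, σ, h⟩

theorem isMiddle321_insertMax_succAbove {y : Fin n} :
    IsMiddle321 (insertMax q σ) (q.succAbove y) ↔
      (q ≤ y.castSucc ∨ ∃ x < y, σ y < σ x) ∧ ∃ z > y, σ z < σ y := by
  rw [IsMiddle321, Fin.exists_iff_succAbove q, Fin.exists_iff_succAbove q]
  simp [Fin.lt_succAbove_iff_le_castSucc, Fin.le_last]

theorem strictMonoOn_iff_forall_not_exists {α β : Type*} [LinearOrder α] [LinearOrder β]
    {f : α → β} {s : Set α} (hf : Function.Injective f) (hs : IsUpperSet s) :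
    StrictMonoOn f s ↔ ∀ y ∈ s, ¬ ∃ z > y, f z < f y := by
  constructor
  · rintro h y hy ⟨z, hyz, hz⟩
    exact hz.not_gt (h hy (hs hyz.le hy) hyz)
  · intro h y hy z _ hyz
    exact (hf.ne hyz.ne).lt_of_le (not_lt.1 fun hz => h y hy ⟨z, hyz, hz⟩)

theorem avoids321_insertMax :
    Avoids321 (insertMax q σ) ↔ Avoids321 σ ∧ StrictMonoOn σ {x | q ≤ x.castSucc} := by
  have max_not_middle : ¬ IsMiddle321 (insertMax q σ) q := fun ⟨⟨x, _, hx⟩, _⟩ =>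
    (hx.trans_le (Fin.le_last _)).ne insertMax_apply_self
  have upper : IsUpperSet {x : Fin n | q ≤ x.castSucc} := fun x y hxy hx =>
    le_trans hx (Fin.castSucc_le_castSucc_iff.2 hxy)
  rw [strictMonoOn_iff_forall_not_exists σ.injective upper, Avoids321,
    Fin.forall_iff_succAbove q, and_iff_right max_not_middle]
  simp only [isMiddle321_insertMax_succAbove, or_and_right, not_or, forall_and,
    not_and]
  exact and_comm.trans (and_congr_left' (forall_congr' fun _ => not_and.symm))

/-- The permutations of `Fin n` that avoid 3-2-1 and increase on the positions from `p` on, i.e.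
those into which a new maximum can be inserted at `p` without creating a 3-2-1. -/
def avoidersWithSortedTail (n p : ℕ) : Set (Perm (Fin n)) :=
  {σ | Avoids321 σ ∧ StrictMonoOn σ {x | p ≤ (x : ℕ)}}

theorem avoids321_insertMax_iff_mem :
    Avoids321 (insertMax q σ) ↔ σ ∈ avoidersWithSortedTail n q :=
  avoids321_insertMax

theorem insertMax_mem_of_lt (hq : (q : ℕ) < p) :
    insertMax q σ ∈ avoidersWithSortedTail (n + 1) p ↔ σ ∈ avoidersWithSortedTail n q := by
  refine (and_iff_left_of_imp fun h x hx y hy hxy => ?_).trans avoids321_insertMax_iff_mem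
  have lt_of_mem {x : Fin (n + 1)} (hx : p ≤ (x : ℕ)) : q < x := hq.trans_le hx
  obtain ⟨a, rfl⟩ := Fin.exists_succAbove_eq (lt_of_mem hx).ne'
  obtain ⟨b, rfl⟩ := Fin.exists_succAbove_eq (lt_of_mem hy).ne'
  rw [insertMax_apply_succAbove, insertMax_apply_succAbove, Fin.castSucc_lt_castSucc_iff]
  exact (avoids321_insertMax.1 h).2 ((Fin.lt_succAbove_iff_le_castSucc _ _).1 (lt_of_mem hx))
    ((Fin.lt_succAbove_iff_le_castSucc _ _).1 (lt_of_mem hy)) (Fin.succAbove_lt_succAbove_iff.1 hxy)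

theorem insertMax_last_apply_castSucc (x : Fin n) :
    insertMax (Fin.last n) σ x.castSucc = (σ x).castSucc := by
  rw [← Fin.succAbove_last, insertMax_apply_succAbove, Fin.succAbove_last]

theorem insertMax_last_mem :
    insertMax (Fin.last n) σ ∈ avoidersWithSortedTail (n + 1) p ↔
      σ ∈ avoidersWithSortedTail n p := by
  have avoids : Avoids321 (insertMax (Fin.last n) σ) ↔ Avoids321 σ := by
    rw [avoids321_insertMax]
    exact and_iff_left fun x hx => absurd (Fin.castSucc_lt_last x) (not_lt.2 hx)
  refine and_congr avoids ⟨fun h x hx y hy hxy => ?_, fun h x hx y hy hxy => ?_⟩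
  · simpa only [insertMax_last_apply_castSucc, Fin.castSucc_lt_castSucc_iff] using
      h (a := x.castSucc) (b := y.castSucc) hx hy (Fin.castSucc_lt_castSucc_iff.2 hxy)
  · obtain ⟨a, rfl⟩ := Fin.exists_castSucc_eq.2 (hxy.trans_le (Fin.le_last y)).ne
    rw [insertMax_last_apply_castSucc]
    induction y using Fin.lastCases with
    | last =>
      rw [insertMax_apply_self]
      exact Fin.castSucc_lt_last _
    | cast b =>
      rw [insertMax_last_apply_castSucc, Fin.castSucc_lt_castSucc_iff]
      exact h hx hy (Fin.castSucc_lt_castSucc_iff.1 hxy)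

theorem insertMax_not_mem (hpq : p ≤ (q : ℕ)) (hq : q ≠ Fin.last n) :
    insertMax q σ ∉ avoidersWithSortedTail (n + 1) p := by
  intro h
  have lt_last := h.2 hpq (hpq.trans (Fin.le_last q)) (Fin.lt_last_iff_ne_last.2 hq)
  rw [insertMax_apply_self] at lt_last
  exact lt_last.not_ge (Fin.le_last _)

theorem ncard_eq_sum_insertMax (s : Set (Perm (Fin (n + 1)))) :
    s.ncard = ∑ q, {σ | insertMax q σ ∈ s}.ncard := by
  have eq_iUnion : s = ⋃ q, insertMax q '' {σ | insertMax q σ ∈ s} := by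
    ext ρ
    obtain ⟨q, σ, rfl⟩ := exists_insertMax_eq ρ
    simp only [Set.mem_iUnion]
    refine ⟨fun h => ⟨q, σ, h, rfl⟩, ?_⟩
    rintro ⟨q', σ', h, h'⟩
    exact h' ▸ h
  have disjoint : Pairwise (Function.onFun Disjoint
      fun q => insertMax q '' {σ | insertMax q σ ∈ s}) := by
    refine fun q q' hq => Set.disjoint_left.2 ?_
    rintro _ ⟨σ, -, rfl⟩ ⟨σ', -, h⟩
    exact hq (insertMax_eq_last_iff.1 (h ▸ insertMax_apply_self)).symm
  conv_lhs => rw [eq_iUnion, Set.ncard_iUnion_of_finite (fun _ => Set.toFinite _) disjoint,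
    finsum_eq_sum_of_fintype]
  simp only [Set.ncard_image_of_injective _ (insertMax_injective _)]

theorem ncard_avoids321_and_apply_eq_last (q : Fin (n + 1)) :
    {ρ : Perm (Fin (n + 1)) | Avoids321 ρ ∧ ρ q = Fin.last n}.ncard
      = (avoidersWithSortedTail n q).ncard := by
  rw [← Set.ncard_image_of_injective _ (insertMax_injective q)]
  congr 1
  ext ρ
  obtain ⟨q', σ, rfl⟩ := exists_insertMax_eq ρ
  constructor
  · rintro ⟨avoids, max⟩
    obtain rfl := insertMax_eq_last_iff.1 max
    exact ⟨σ, avoids321_insertMax.1 avoids, rfl⟩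
  · rintro ⟨σ', h, h'⟩
    exact h' ▸ ⟨avoids321_insertMax.2 h, insertMax_apply_self⟩

theorem ncard_avoidersWithSortedTail_succ (hp : p ≤ n) :
    (avoidersWithSortedTail (n + 1) p).ncard
      = ∑ q ∈ Finset.range (p + 1), (avoidersWithSortedTail n q).ncard := by
  have castSucc_summand (q : Fin n) :
      {σ | insertMax q.castSucc σ ∈ avoidersWithSortedTail (n + 1) p}.ncard
        = if (q : ℕ) < p then (avoidersWithSortedTail n q).ncard else 0 := by
    split_ifs with hq
    · simp only [insertMax_mem_of_lt (q := q.castSucc) hq]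
      rfl
    · simp [insertMax_not_mem (q := q.castSucc) (not_lt.1 hq) (Fin.castSucc_lt_last q).ne]
  rw [ncard_eq_sum_insertMax, Fin.sum_univ_castSucc, Finset.sum_range_succ]
  simp only [insertMax_last_mem, castSucc_summand, Set.ofPred_mem_eq, Nat.add_right_cancel_iff]
  rw [Fin.sum_univ_eq_sum_range (fun q => if q < p then (avoidersWithSortedTail n q).ncard else 0),
    ← Finset.sum_filter]
  congr 2
  ext q
  simp only [Finset.mem_filter, Finset.mem_range]
  omega

theorem ncard_avoidersWithSortedTail_self :
    (avoidersWithSortedTail (n + 1) (n + 1)).ncard = (avoidersWithSortedTail (n + 1) n).ncard := by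
  have subsingleton {p : ℕ} (hp : n ≤ p) : {x : Fin (n + 1) | p ≤ (x : ℕ)}.Subsingleton :=
    fun x hx y hy => Fin.ext <| (le_antisymm (Fin.is_le x) (hp.trans hx)).trans
      (le_antisymm (Fin.is_le y) (hp.trans hy)).symm
  congr 1
  ext σ
  exact and_congr_right fun _ => iff_of_true ((subsingleton n.le_succ).strictMonoOn σ)
    ((subsingleton le_rfl).strictMonoOn σ)

open PowerSeries

theorem coeff_succ_catalanSeries_pow_succ (k r : ℕ) :
    coeff (k + 1) (catalanSeries ^ (r + 1))
      = coeff k (catalanSeries ^ (r + 2)) + coeff (k + 1) (catalanSeries ^ r) := by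
  have pow_succ_eq : catalanSeries ^ (r + 1) = catalanSeries ^ (r + 2) * X + catalanSeries ^ r := by
    calc catalanSeries ^ (r + 1) = catalanSeries ^ r * (catalanSeries ^ 2 * X + 1) := by
          rw [catalanSeries_sq_mul_X_add_one, pow_succ]
      _ = catalanSeries ^ (r + 2) * X + catalanSeries ^ r := by ring
  rw [pow_succ_eq, map_add, coeff_succ_mul_X]

theorem ncard_avoidersWithSortedTail_zero :
    (avoidersWithSortedTail n 0).ncard = 1 := by
  induction n with
  | zero =>
    rw [Set.ncard_eq_one]
    exact ⟨1, Set.eq_singleton_iff_unique_mem.2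
      ⟨⟨fun y => y.elim0, fun x => x.elim0⟩, fun σ _ => Subsingleton.elim σ 1⟩⟩
  | succ n ih => rw [ncard_avoidersWithSortedTail_succ n.zero_le, Finset.sum_range_one, ih]

theorem ncard_avoidersWithSortedTail_succ_succ (hp : p + 1 ≤ n) :
    (avoidersWithSortedTail (n + 1) (p + 1)).ncard
      = (avoidersWithSortedTail (n + 1) p).ncard + (avoidersWithSortedTail n (p + 1)).ncard := by
  rw [ncard_avoidersWithSortedTail_succ hp, Finset.sum_range_succ,
    ← ncard_avoidersWithSortedTail_succ (p.le_succ.trans hp)]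

theorem ncard_avoidersWithSortedTail (p r : ℕ) :
    (avoidersWithSortedTail (p + r) p).ncard = coeff p (catalanSeries ^ (r + 1)) := by
  induction p generalizing r with
  | zero => simp [ncard_avoidersWithSortedTail_zero]
  | succ p ih =>
    induction r with
    | zero =>
      rw [coeff_succ_catalanSeries_pow_succ, pow_zero, coeff_one, if_neg p.succ_ne_zero]
      exact ncard_avoidersWithSortedTail_self.trans (ih 1)
    | succ r ihr =>
      rw [coeff_succ_catalanSeries_pow_succ, ← ihr, ← ih, show p + (r + 2) = p + 1 + r + 1 by ring]
      exact ncard_avoidersWithSortedTail_succ_succ le_self_add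

theorem two_mul_add_mul_coeff_catalanSeries_pow (k r : ℕ) :
    (2 * k + r) * coeff k (catalanSeries ^ r) = r * (2 * k + r).choose k := by
  induction k generalizing r with
  | zero => simp
  | succ k ih =>
    induction r with
    | zero => simp [coeff_one]
    | succ r ihr =>
      have ih := ih (r + 2)
      have choose_succ := Nat.choose_succ_right_eq (2 * k + r + 2) k
      rw [coeff_succ_catalanSeries_pow_succ]
      rw [show 2 * k + (r + 2) = 2 * k + r + 2 by ring] at ih
      rw [show 2 * (k + 1) + r = 2 * k + r + 2 by ring] at ihr
      rw [show 2 * (k + 1) + (r + 1) = 2 * k + r + 2 + 1 by ring, Nat.choose_succ_succ' _ k]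
      rw [show 2 * k + r + 2 - k = k + r + 2 by omega] at choose_succ
      refine Nat.eq_of_mul_eq_mul_left (Nat.succ_pos (2 * k + r + 1)) ?_
      zify at *
      linear_combination (2 * k + r + 3 : ℤ) * (ih + ihr) - 2 * choose_succ

end Counting

section Transfer

variable {α : Type*} [LinearOrder α] {i j x : α} {m : ℕ} {ρ : Perm (Fin (m + 1))}
  {e : Fin (m + 1) ≃o Set.Iic j}

/-- The permutation `ρ`, transported to `Set.Iic j` along `e` and extended by the identity. -/
def extendIic (e : Fin (m + 1) ≃o Set.Iic j) (ρ : Perm (Fin (m + 1))) : Perm α :=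
  ρ.extendDomain e.toEquiv

theorem extendIic_apply_coe (y : Fin (m + 1)) : extendIic e ρ (e y) = e (ρ y) :=
  Perm.extendDomain_apply_image ρ e.toEquiv y

theorem extendIic_apply_of_gt (hx : j < x) : extendIic e ρ x = x :=
  Perm.extendDomain_apply_not_subtype ρ e.toEquiv hx.not_ge

theorem extendIic_injective (e : Fin (m + 1) ≃o Set.Iic j) : Function.Injective (extendIic e) :=
  Perm.extendDomainHom_injective e.toEquiv

theorem orderIso_apply_eq_iff {y : Fin (m + 1)} : (e y : α) = j ↔ y = Fin.last m := by
  rw [← Fin.top_eq_last, ← map_eq_top_iff e, Subtype.ext_iff]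
  rfl

theorem exists_extendIic_eq {σ : Perm α} (hσ : ∀ x, j < x → σ x = x) :
    ∃ ρ, extendIic e ρ = σ := by
  have le_iff x : σ x ≤ j ↔ x ≤ j := by
    rw [← not_lt, ← not_lt, not_iff_not]
    exact ⟨fun hx => σ.injective (hσ _ hx) ▸ hx, fun hx => (hσ x hx).symm ▸ hx⟩
  refine ⟨e.toEquiv.symm.permCongr (σ.subtypePerm (p := (· ∈ Set.Iic j)) le_iff), ?_⟩
  ext x
  rcases le_or_gt x j with hx | hx
  · obtain ⟨y, hy⟩ := e.surjective ⟨x, hx⟩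
    obtain rfl : (e y : α) = x := congr_arg Subtype.val hy
    rw [extendIic_apply_coe]
    simp only [permCongr_apply, symm_symm, RelIso.coe_fn_toEquiv, OrderIso.coe_symm_toEquiv,
      OrderIso.apply_symm_apply]
    rfl
  · rw [extendIic_apply_of_gt hx, hσ x hx]

theorem isMiddle321_extendIic {y : Fin (m + 1)} :
    IsMiddle321 (extendIic e ρ) (e y) ↔ IsMiddle321 ρ y := by
  have exists_iff (P : α → Prop) (hP : ∀ x, P x → x ≤ j) : (∃ x, P x) ↔ ∃ y, P (e y) := by
    refine ⟨fun ⟨x, hx⟩ => ?_, fun ⟨y, hy⟩ => ⟨e y, hy⟩⟩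
    obtain ⟨y, hy⟩ := e.surjective ⟨x, hP x hx⟩
    exact ⟨y, by rwa [hy]⟩
  refine and_congr ((exists_iff _ fun x hx => hx.1.le.trans (e y).2).trans ?_)
    ((exists_iff _ fun z hz => ?_).trans ?_)
  · simp [extendIic_apply_coe]
  · by_contra! hjz
    rw [extendIic_apply_of_gt hjz, extendIic_apply_coe] at hz
    exact (hz.2.trans_le (e (ρ y)).2).not_gt hjz
  · simp [extendIic_apply_coe]

theorem avoids321_extendIic : Avoids321 (extendIic e ρ) ↔ Avoids321 ρ := by
  refine ⟨fun h y hy => h (e y) (isMiddle321_extendIic.2 hy), fun h x hx => ?_⟩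
  rcases le_or_gt x j with hxj | hxj
  · obtain ⟨y, hy⟩ := e.surjective ⟨x, hxj⟩
    obtain rfl : (e y : α) = x := congr_arg Subtype.val hy
    exact h y (isMiddle321_extendIic.1 hx)
  · obtain ⟨z, hxz, hz⟩ := hx.2
    rw [extendIic_apply_of_gt hxj, extendIic_apply_of_gt (hxj.trans hxz)] at hz
    exact hz.not_gt hxz

theorem ncard_leftFactors_orderIso_apply [Finite α] (e : Fin (m + 1) ≃o Set.Iic j)
    (q : Fin (m + 1)) :
    (leftFactors (e q : α) j).ncard = (avoidersWithSortedTail m q).ncard := by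
  have apply_eq_iff (ρ : Perm (Fin (m + 1))) : extendIic e ρ (e q) = j ↔ ρ q = Fin.last m := by
    rw [extendIic_apply_coe, orderIso_apply_eq_iff]
  have eq_image : leftFactors (e q : α) j =
      extendIic e '' {ρ | Avoids321 ρ ∧ ρ q = Fin.last m} := by
    ext σ
    constructor
    · rintro ⟨avoids, fixes, max⟩
      obtain ⟨ρ, rfl⟩ := exists_extendIic_eq (e := e) fixes
      exact ⟨ρ, ⟨avoids321_extendIic.1 avoids, (apply_eq_iff ρ).1 max⟩, rfl⟩
    · rintro ⟨ρ, ⟨avoids, max⟩, rfl⟩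
      exact ⟨avoids321_extendIic.2 avoids, fun x hx => extendIic_apply_of_gt hx,
        (apply_eq_iff ρ).2 max⟩
  rw [eq_image, Set.ncard_image_of_injective _ (extendIic_injective e),
    ncard_avoids321_and_apply_eq_last]

theorem ncard_Iio_orderIso_apply (e : Fin (m + 1) ≃o Set.Iic j) (q : Fin (m + 1)) :
    (Set.Iio (e q : α)).ncard = q := by
  have eq_image : Set.Iio (e q : α) = Subtype.val ∘ e '' Set.Iio q := by
    ext x
    constructor
    · intro hx
      obtain ⟨y, hy⟩ := e.surjective ⟨x, hx.le.trans (e q).2⟩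
      obtain rfl : (e y : α) = x := congr_arg Subtype.val hy
      exact ⟨y, e.lt_iff_lt.1 hx, rfl⟩
    · rintro ⟨y, hy, rfl⟩
      exact e.lt_iff_lt.2 hy
  rw [eq_image, Set.ncard_image_of_injective _ (Subtype.val_injective.comp e.injective),
    ← Finset.coe_Iio, Set.ncard_coe_finset, Fin.card_Iio]

theorem ncard_leftFactors [Finite α] (hij : i < j) :
    (leftFactors i j).ncard
      = (avoidersWithSortedTail (Set.Iio j).ncard (Set.Iio i).ncard).ncard := by
  cases nonempty_fintype α
  have card_Iic : Fintype.card (Set.Iic j) = (Set.Iio j).ncard + 1 := by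
    rw [← Set.ncard_insert_of_notMem Set.self_notMem_Iio, Set.Iio_insert,
      ← Nat.card_coe_set_eq, Nat.card_eq_fintype_card]
  let e := Fintype.orderIsoFinOfCardEq (Set.Iic j) card_Iic
  obtain ⟨q, hq⟩ := e.surjective ⟨i, hij.le⟩
  obtain rfl : (e q : α) = i := congr_arg Subtype.val hq
  rw [ncard_leftFactors_orderIso_apply, ncard_Iio_orderIso_apply]

theorem ncard_rightFactors [Finite α] {k : α} (hjk : j < k) :
    (rightFactors j k).ncard
      = (avoidersWithSortedTail (Set.Ioi j).ncard (Set.Ioi k).ncard).ncard :=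
  ncard_leftFactors (α := αᵒᵈ) hjk

end Transfer

section Assembly

open PowerSeries

theorem sum_ncard_avoidersWithSortedTail (j : ℕ) :
    ∑ i ∈ Finset.range (j - 1), (avoidersWithSortedTail j i).ncard
      = coeff j (X ^ 2 * catalanSeries ^ 4) := by
  rcases lt_or_ge j 2 with hj | hj
  · rw [coeff_X_pow_mul', if_neg hj.not_ge, Nat.sub_eq_zero_of_le (Nat.le_of_lt_succ hj),
      Finset.sum_range_zero]
  · obtain ⟨a, rfl⟩ := Nat.exists_eq_add_of_le' hj
    rw [coeff_X_pow_mul, ← ncard_avoidersWithSortedTail a 3]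
    exact (ncard_avoidersWithSortedTail_succ (Nat.le_add_right a 2)).symm

variable {n : ℕ} {i j k : Fin n}

/-- The positions before `j` that are not adjacent to `j`. -/
def farBelow (j : Fin n) : Finset (Fin n) :=
  Finset.univ.filter fun i : Fin n => (i : ℕ) + 1 < j

/-- The positions after `j` that are not adjacent to `j`. -/
def farAbove (j : Fin n) : Finset (Fin n) :=
  Finset.univ.filter fun k : Fin n => (j : ℕ) + 1 < k

theorem mem_farBelow : i ∈ farBelow j ↔ (i : ℕ) + 1 < j :=
  Finset.mem_filter_univ i

theorem mem_farAbove : k ∈ farAbove j ↔ (j : ℕ) + 1 < k :=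
  Finset.mem_filter_univ k

theorem lt_of_mem_farBelow (h : i ∈ farBelow j) : i < j :=
  (Nat.lt_succ_self _).trans (mem_farBelow.1 h)

theorem lt_of_mem_farAbove (h : k ∈ farAbove j) : j < k :=
  (Nat.lt_succ_self _).trans (mem_farAbove.1 h)

theorem rev_mem_farBelow_rev : k.rev ∈ farBelow j.rev ↔ k ∈ farAbove j := by
  rw [mem_farBelow, mem_farAbove, Fin.val_rev, Fin.val_rev]
  omega

theorem sum_farBelow_avoidersWithSortedTail (j : Fin n) :
    ∑ i ∈ farBelow j, (avoidersWithSortedTail j i).ncard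
      = coeff (j : ℕ) (X ^ 2 * catalanSeries ^ 4) := by
  rw [← sum_ncard_avoidersWithSortedTail]
  refine Finset.sum_bij (fun i _ => (i : ℕ)) (fun i hi => ?_) (fun _ _ _ _ => Fin.ext)
    (fun i hi => ?_) fun _ _ => rfl
  · exact Finset.mem_range.2 (Nat.lt_sub_iff_add_lt.2 (mem_farBelow.1 hi))
  · have hij := Nat.lt_sub_iff_add_lt.1 (Finset.mem_range.1 hi)
    exact ⟨⟨i, (i.lt_succ_self.trans hij).trans j.2⟩, mem_farBelow.2 hij, rfl⟩

theorem ncard_Iio (j : Fin n) : (Set.Iio j).ncard = j := by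
  rw [← Finset.coe_Iio, Set.ncard_coe_finset, Fin.card_Iio]

theorem ncard_Ioi (j : Fin n) : (Set.Ioi j).ncard = j.rev := by
  rw [← Finset.coe_Ioi, Set.ncard_coe_finset, Fin.card_Ioi, Fin.val_rev, add_comm, Nat.sub_sub]

theorem sum_ncard_leftFactors (j : Fin n) :
    ∑ i ∈ farBelow j, (leftFactors i j).ncard
      = coeff (j : ℕ) (X ^ 2 * catalanSeries ^ 4) := by
  rw [← sum_farBelow_avoidersWithSortedTail]
  refine Finset.sum_congr rfl fun i hi => ?_
  rw [ncard_leftFactors (lt_of_mem_farBelow hi), ncard_Iio, ncard_Iio]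

theorem sum_ncard_rightFactors (j : Fin n) :
    ∑ k ∈ farAbove j, (rightFactors j k).ncard
      = coeff (j.rev : ℕ) (X ^ 2 * catalanSeries ^ 4) := by
  rw [← sum_farBelow_avoidersWithSortedTail]
  refine Finset.sum_equiv Fin.revPerm (fun k => rev_mem_farBelow_rev.symm) fun k hk => ?_
  rw [ncard_rightFactors (lt_of_mem_farAbove hk), ncard_Ioi, ncard_Ioi]
  rfl

/-- `π` has exactly one occurrence of 3-2-1, and no two of its three positions are adjacent. -/
def HasSeparatedUnique321 (π : Perm (Fin n)) : Prop :=
  ∃ i j k : Fin n, i ∈ farBelow j ∧ k ∈ farAbove j ∧ IsUnique321 π i j k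

theorem ncard_hasSeparatedUnique321_eq_sum :
    {π : Perm (Fin n) | HasSeparatedUnique321 π}.ncard =
      ∑ j : Fin n, ∑ p ∈ farBelow j ×ˢ farAbove j, {π | IsUnique321 π p.1 j p.2}.ncard := by
  let positions : Finset ((_ : Fin n) × Fin n × Fin n) :=
    Finset.univ.sigma fun j => farBelow j ×ˢ farAbove j
  have eq_biUnion : {π : Perm (Fin n) | HasSeparatedUnique321 π} =
      ⋃ t ∈ (positions : Set ((_ : Fin n) × Fin n × Fin n)),
        {π | IsUnique321 π t.2.1 t.1 t.2.2} := by
    ext π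
    simp only [Set.mem_iUnion, positions, Finset.mem_coe, Finset.mem_sigma, Finset.mem_univ,
      true_and, Finset.mem_product]
    constructor
    · rintro ⟨i, j, k, hij, hjk, h⟩
      exact ⟨⟨j, i, k⟩, ⟨hij, hjk⟩, h⟩
    · rintro ⟨⟨j, i, k⟩, ⟨hij, hjk⟩, h⟩
      exact ⟨i, j, k, hij, hjk, h⟩
  have disjoint : (positions : Set ((_ : Fin n) × Fin n × Fin n)).PairwiseDisjoint
      fun t => {π : Perm (Fin n) | IsUnique321 π t.2.1 t.1 t.2.2} := by
    rintro ⟨j, i, k⟩ - ⟨j', i', k'⟩ - ht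
    refine Set.disjoint_left.2 fun π h h' => ht ?_
    obtain ⟨rfl, rfl, rfl⟩ := h'.unique h.lt_left h.lt_right h.desc_left h.desc_right
    rfl
  rw [eq_biUnion, Set.Finite.ncard_biUnion positions.finite_toSet
    (fun t _ => Set.toFinite {π | IsUnique321 π t.2.1 t.1 t.2.2}) disjoint,
    finsum_mem_coe_finset, Finset.sum_sigma]

theorem sum_ncard_isUnique321 (j : Fin n) :
    ∑ p ∈ farBelow j ×ˢ farAbove j, {π | IsUnique321 π p.1 j p.2}.ncard
      = coeff (j : ℕ) (X ^ 2 * catalanSeries ^ 4) *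
        coeff (j.rev : ℕ) (X ^ 2 * catalanSeries ^ 4) := by
  rw [← sum_ncard_leftFactors, ← sum_ncard_rightFactors, Finset.sum_mul_sum,
    ← Finset.sum_product']
  refine Finset.sum_congr rfl fun p hp => ?_
  obtain ⟨hij, hjk⟩ := Finset.mem_product.1 hp
  exact ncard_isUnique321 (lt_of_mem_farBelow hij) (lt_of_mem_farAbove hjk)

theorem ncard_hasSeparatedUnique321 (m : ℕ) :
    {π : Perm (Fin (m + 5)) | HasSeparatedUnique321 π}.ncard = coeff m (catalanSeries ^ 8) := by
  let G := X ^ 2 * catalanSeries ^ 4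
  calc {π : Perm (Fin (m + 5)) | HasSeparatedUnique321 π}.ncard
    _ = ∑ j : Fin (m + 5), coeff (j : ℕ) G * coeff (m + 4 - j) G := by
      rw [ncard_hasSeparatedUnique321_eq_sum]
      refine Finset.sum_congr rfl fun j _ => ?_
      rw [sum_ncard_isUnique321, Fin.val_rev, Nat.add_sub_add_right (m + 4) 1 j]
    _ = coeff (m + 4) (G * G) := by
      rw [Fin.sum_univ_eq_sum_range (fun j => coeff j G * coeff (m + 4 - j) G), coeff_mul,
        Finset.Nat.sum_antidiagonal_eq_sum_range_succ_mk]
    _ = coeff (m + 4) (X ^ 4 * catalanSeries ^ 8) := by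
      congr 1
      ring
    _ = coeff m (catalanSeries ^ 8) := coeff_X_pow_mul _ 4 m

theorem coeff_catalanSeries_pow_succ (k r : ℕ) :
    ((coeff k (catalanSeries ^ (r + 1)) : ℕ) : ℚ)
      = (r + 1) / (k + r + 1) * (2 * k + r).choose k := by
  have ballot := two_mul_add_mul_coeff_catalanSeries_pow k (r + 1)
  have choose_succ := Nat.choose_mul_succ_eq (2 * k + r) k
  rw [show 2 * k + r + 1 - k = k + r + 1 by omega] at choose_succ
  rw [← add_assoc] at ballot
  have ne_zero : (2 * k + r + 1 : ℚ) ≠ 0 := by positivity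
  rw [div_mul_eq_mul_div, eq_div_iff (by positivity)]
  refine mul_left_cancel₀ ne_zero ?_
  qify at ballot choose_succ
  linear_combination (k + r + 1 : ℚ) * ballot - (r + 1 : ℚ) * choose_succ

end Assembly

section Complement

variable {n : ℕ} {π : Perm (Fin n)} {i j k : Fin n}

theorem revPerm_mul_apply_lt_iff :
    (Fin.revPerm * π : Perm (Fin n)) i < (Fin.revPerm * π : Perm (Fin n)) j ↔ π j < π i :=
  Fin.rev_lt_rev

theorem isUnique321_revPerm_mul_iff :
    IsUnique321 (Fin.revPerm * π) i j k ↔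
      ∀ t : Fin n × Fin n × Fin n, (t.1 < t.2.1 ∧ t.2.1 < t.2.2 ∧ π t.1 < π t.2.1 ∧
        π t.2.1 < π t.2.2) ↔ t = (i, j, k) := by
  constructor
  · rintro h ⟨x, y, z⟩
    rw [Prod.mk.injEq, Prod.mk.injEq]
    constructor
    · rintro ⟨hxy, hyz, hx, hz⟩
      exact h.unique hxy hyz (revPerm_mul_apply_lt_iff.2 hx) (revPerm_mul_apply_lt_iff.2 hz)
    · rintro ⟨rfl, rfl, rfl⟩
      exact ⟨h.lt_left, h.lt_right, revPerm_mul_apply_lt_iff.1 h.desc_left,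
        revPerm_mul_apply_lt_iff.1 h.desc_right⟩
  · intro h
    obtain ⟨hij, hjk, hi, hk⟩ := (h (i, j, k)).2 rfl
    refine ⟨hij, hjk, revPerm_mul_apply_lt_iff.2 hi, revPerm_mul_apply_lt_iff.2 hk, ?_⟩
    intro x y z hxy hyz hx hz
    simpa only [Prod.mk.injEq] using
      (h (x, y, z)).1 ⟨hxy, hyz, revPerm_mul_apply_lt_iff.1 hx, revPerm_mul_apply_lt_iff.1 hz⟩

theorem occ123_eq_one_iff :
    occ123 π = 1 ↔ ∃ i j k, IsUnique321 (Fin.revPerm * π) i j k := by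
  simp only [occ123, Finset.card_eq_one, Finset.ext_iff, Finset.mem_filter_univ,
    Finset.mem_singleton, Prod.exists, isUnique321_revPerm_mul_iff]

theorem IsUnique321.forall_not_iff (h : IsUnique321 (Fin.revPerm * π) i j k)
    {P : Fin n × Fin n × Fin n → Prop} :
    (∀ t, ¬ (t.1 < t.2.1 ∧ t.2.1 < t.2.2 ∧ P t ∧ π t.1 < π t.2.1 ∧ π t.2.1 < π t.2.2)) ↔
      ¬ P (i, j, k) := by
  have occurrence_iff := isUnique321_revPerm_mul_iff.1 h
  constructor
  · intro none hP
    obtain ⟨hij, hjk, hi, hk⟩ := (occurrence_iff (i, j, k)).2 rfl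
    exact none (i, j, k) ⟨hij, hjk, hP, hi, hk⟩
  · rintro hP t ⟨hxy, hyz, hPt, hx, hz⟩
    exact hP ((occurrence_iff t).1 ⟨hxy, hyz, hx, hz⟩ ▸ hPt)

theorem IsUnique321.occ1_23_eq_zero_iff (h : IsUnique321 (Fin.revPerm * π) i j k) :
    occ1_23 π = 0 ↔ k ∈ farAbove j := by
  rw [occ1_23, Finset.card_filter_eq_zero_iff, mem_farAbove]
  simp only [Finset.mem_univ, true_imp_iff]
  rw [h.forall_not_iff (P := fun t => (t.2.2 : ℕ) = t.2.1 + 1), eq_comm]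
  exact (Nat.succ_le_of_lt h.lt_right).lt_iff_ne.symm

theorem IsUnique321.occ12_3_eq_zero_iff (h : IsUnique321 (Fin.revPerm * π) i j k) :
    occ12_3 π = 0 ↔ i ∈ farBelow j := by
  rw [occ12_3, Finset.card_filter_eq_zero_iff, mem_farBelow]
  simp only [Finset.mem_univ, true_imp_iff]
  rw [h.forall_not_iff (P := fun t => (t.2.1 : ℕ) = t.1 + 1), eq_comm]
  exact (Nat.succ_le_of_lt h.lt_left).lt_iff_ne.symm

theorem occ_iff_hasSeparatedUnique321 :
    occ123 π = 1 ∧ occ1_23 π = 0 ∧ occ12_3 π = 0 ↔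
      HasSeparatedUnique321 (Fin.revPerm * π) := by
  rw [occ123_eq_one_iff]
  constructor
  · rintro ⟨⟨i, j, k, h⟩, hjk, hij⟩
    exact ⟨i, j, k, h.occ12_3_eq_zero_iff.1 hij, h.occ1_23_eq_zero_iff.1 hjk, h⟩
  · rintro ⟨i, j, k, hij, hjk, h⟩
    exact ⟨⟨i, j, k, h⟩, h.occ1_23_eq_zero_iff.2 hjk, h.occ12_3_eq_zero_iff.2 hij⟩

theorem ncard_occ_eq_ncard_hasSeparatedUnique321 (n : ℕ) :
    {π : Perm (Fin n) | occ123 π = 1 ∧ occ1_23 π = 0 ∧ occ12_3 π = 0}.ncard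
      = {π : Perm (Fin n) | HasSeparatedUnique321 π}.ncard := by
  simp only [occ_iff_hasSeparatedUnique321]
  exact Set.ncard_preimage_of_injective_subset_range (s := {π | HasSeparatedUnique321 π})
    (mul_right_injective Fin.revPerm) fun π _ => mul_left_surjective Fin.revPerm π

end Complement

end Single123

/-- The number of permutations of length `n ≥ 5` with exactly one occurrence of
1-2-3, no occurrence of 1-23 and no occurrence of 12-3 is
`(8/(n+3)) * C(2n-3, n+2)`. -/
theorem single_123_no_adjacent_count (n : ℕ) (hn : 5 ≤ n) :
    ({π : Equiv.Perm (Fin n) | occ123 π = 1 ∧ occ1_23 π = 0 ∧ occ12_3 π = 0}.ncard : ℚ)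
      = (8 / (n + 3 : ℚ)) * (Nat.choose (2 * n - 3) (n + 2)) := by
  obtain ⟨m, rfl⟩ := Nat.exists_eq_add_of_le' hn
  have choose_symm : (2 * (m + 5) - 3).choose (m + 5 + 2) = (2 * m + 7).choose m :=
    Nat.choose_symm_of_eq_add (by omega)
  rw [Single123.ncard_occ_eq_ncard_hasSeparatedUnique321,
    Single123.ncard_hasSeparatedUnique321, Single123.coeff_catalanSeries_pow_succ m 7,
    choose_symm]
  push_cast
  ring
end
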